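/- arXiv:2312.03778 — 5 statements merged into one kernel-verified Lean document; each statement's English description precedes it below -/
import Mathlib

section
/- Let q ∈ (1,2], let H be an n×n contraction (H*H ≤ I), and let L be an n×n positive definite matrix. Then the function h_q(A) = log_q(Tr[(I − H*H + (q−1)L + H* A^{q−1} H)^{1/(q−1)}]) is concave on n×n positive definite matrices A. -/
open Matrix ComplexOrder

/-- Matrix logarithm of a (positive definite) Hermitian matrix, via functional calculus. -/
noncomputable def mlog {n : ℕ} (A : Matrix (Fin n) (Fin n) ℂ) : Matrix (Fin n) (Fin n) ℂ :=
  cfc Real.log A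

/-- Matrix exponential of a Hermitian matrix, via functional calculus. -/
noncomputable def mexp {n : ℕ} (A : Matrix (Fin n) (Fin n) ℂ) : Matrix (Fin n) (Fin n) ℂ :=
  cfc Real.exp A

/-- Real power of a (positive definite) Hermitian matrix, via functional calculus. -/
noncomputable def mpow {n : ℕ} (A : Matrix (Fin n) (Fin n) ℂ) (p : ℝ) : Matrix (Fin n) (Fin n) ℂ :=
  cfc (fun x : ℝ => x ^ p) A

/-- Deformed logarithm `log_q x = (x^(q-1) - 1)/(q-1)`. -/
noncomputable def logq (q x : ℝ) : ℝ := (x ^ (q - 1) - 1) / (q - 1)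

/-- Deformed exponential `exp_q x = (1 + (q-1)x)^(1/(q-1))`, with `exp_1 = exp`. -/
noncomputable def expq (q x : ℝ) : ℝ :=
  if q = 1 then Real.exp x else (1 + (q - 1) * x) ^ (1 / (q - 1))

/-- Deformed logarithm of a positive definite matrix, via functional calculus. -/
noncomputable def mlogq {n : ℕ} (q : ℝ) (A : Matrix (Fin n) (Fin n) ℂ) :
    Matrix (Fin n) (Fin n) ℂ :=
  cfc (logq q) A

/-- Deformed exponential of a Hermitian matrix, via functional calculus. -/
noncomputable def mexpq {m : ℕ} (q : ℝ) (A : Matrix (Fin m) (Fin m) ℂ) :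
    Matrix (Fin m) (Fin m) ℂ :=
  cfc (expq q) A

/-- Real part of the trace. -/
noncomputable def trRe {n : ℕ} (M : Matrix (Fin n) (Fin n) ℂ) : ℝ := (Matrix.trace M).re

/-- The reduced relative entropy `S_H(A | B) = Tr[A log A - H* A H log B - A + B]`. -/
noncomputable def SH {n : ℕ} (H A B : Matrix (Fin n) (Fin n) ℂ) : ℝ :=
  trRe (A * mlog A - Hᴴ * A * H * mlog B - A + B)

/-- The reduced Tsallis relative entropy
`S_{H,q}(A | B) = Tr[A^(2-q) log_q A - H* A^(2-q) H log_q B - A + B]`. -/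
noncomputable def STq {n : ℕ} (H : Matrix (Fin n) (Fin n) ℂ) (q : ℝ)
    (A B : Matrix (Fin n) (Fin n) ℂ) : ℝ :=
  trRe (mpow A (2 - q) * mlogq q A - Hᴴ * mpow A (2 - q) * H * mlogq q B - A + B)


/-- The trace functional φ_q(A) = Tr[(I - H*H + (q-1)L + H* A^(q-1) H)^(1/(q-1))]. -/
noncomputable def phiq {n : ℕ} (q : ℝ) (H L A : Matrix (Fin n) (Fin n) ℂ) : ℝ :=
  trRe (mpow (1 - Hᴴ * H + (q - 1) • L + Hᴴ * mpow A (q - 1) * H) (1 / (q - 1)))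

/-- The squared moduli of the entries of `X` written in eigenbases of `A` and `B`. -/
noncomputable def eigenWeight {n : ℕ} {A B : Matrix (Fin n) (Fin n) ℂ} (hA : A.IsHermitian)
    (hB : B.IsHermitian) (X : Matrix (Fin n) (Fin n) ℂ) (i j : Fin n) : ℝ :=
  ‖((hA.eigenvectorUnitary : Matrix (Fin n) (Fin n) ℂ)ᴴ * X *
    (hB.eigenvectorUnitary : Matrix (Fin n) (Fin n) ℂ)) i j‖ ^ 2

lemma eigenWeight_nonneg {n : ℕ} {A B : Matrix (Fin n) (Fin n) ℂ} (hA : A.IsHermitian)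
    (hB : B.IsHermitian) (X : Matrix (Fin n) (Fin n) ℂ) (i j : Fin n) :
    0 ≤ eigenWeight hA hB X i j := by
  unfold eigenWeight; positivity

lemma trRe_add {n : ℕ} (A B : Matrix (Fin n) (Fin n) ℂ) : trRe (A + B) = trRe A + trRe B := by
  simp [trRe]

lemma trRe_smul {n : ℕ} (r : ℝ) (A : Matrix (Fin n) (Fin n) ℂ) : trRe (r • A) = r * trRe A := by
  simp [trRe]

lemma trRe_diagonal_sandwich {n : ℕ} (d e : Fin n → ℝ) (W : Matrix (Fin n) (Fin n) ℂ) :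
    trRe (Wᴴ * diagonal (fun i => (d i : ℂ)) * W * diagonal (fun j => (e j : ℂ))) =
      ∑ i, ∑ j, d i * e j * ‖W i j‖ ^ 2 := by
  rw [Finset.sum_comm]
  simp only [trRe, trace, diag_apply, Complex.re_sum, mul_diagonal]
  refine Finset.sum_congr rfl fun j _ => ?_
  rw [mul_apply, Finset.sum_mul, Complex.re_sum]
  refine Finset.sum_congr rfl fun i _ => ?_
  rw [mul_diagonal, conjTranspose_apply, RCLike.star_def, mul_right_comm _ _ (W i j),
    Complex.conj_mul']
  norm_cast
  ring

/-- Expansion of `Tr[X* f(A) X g(B)]` in eigenbases of `A` and `B`. -/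
lemma trRe_cfc_sandwich {n : ℕ} {A B : Matrix (Fin n) (Fin n) ℂ} (hA : A.IsHermitian)
    (hB : B.IsHermitian) (f g : ℝ → ℝ) (X : Matrix (Fin n) (Fin n) ℂ) :
    trRe (Xᴴ * cfc f A * X * cfc g B) =
      ∑ i, ∑ j, f (hA.eigenvalues i) * g (hB.eigenvalues j) * eigenWeight hA hB X i j := by
  unfold eigenWeight
  rw [← trRe_diagonal_sandwich (fun i => f (hA.eigenvalues i)) (fun j => g (hB.eigenvalues j)),
    hA.cfc_eq, hB.cfc_eq, IsHermitian.cfc, IsHermitian.cfc, Unitary.conjStarAlgAut_apply,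
    Unitary.conjStarAlgAut_apply]
  unfold trRe
  simp only [← mul_assoc]
  rw [trace_mul_comm]
  simp only [conjTranspose_mul, conjTranspose_conjTranspose, star_eq_conjTranspose, mul_assoc]
  rfl

lemma trRe_sandwich_left {n : ℕ} {A B : Matrix (Fin n) (Fin n) ℂ} (hA : A.IsHermitian)
    (hB : B.IsHermitian) (f : ℝ → ℝ) (X : Matrix (Fin n) (Fin n) ℂ) :
    trRe (Xᴴ * cfc f A * X) =
      ∑ i, ∑ j, f (hA.eigenvalues i) * eigenWeight hA hB X i j := by
  have h := trRe_cfc_sandwich hA hB f (fun _ => 1) X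
  rw [cfc_const_one ℝ B hB.isSelfAdjoint] at h
  simpa using h

lemma trRe_sandwich_right {n : ℕ} {A B : Matrix (Fin n) (Fin n) ℂ} (hA : A.IsHermitian)
    (hB : B.IsHermitian) (g : ℝ → ℝ) (X : Matrix (Fin n) (Fin n) ℂ) :
    trRe (Xᴴ * X * cfc g B) =
      ∑ i, ∑ j, g (hB.eigenvalues j) * eigenWeight hA hB X i j := by
  have h := trRe_cfc_sandwich hA hB (fun _ => 1) g X
  rw [cfc_const_one ℝ A hA.isSelfAdjoint] at h
  simpa using h

/-- The quadratic form at `K` of the parallel sum of left multiplication by `A` and right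
multiplication by `t • B`. -/
noncomputable def parallelForm {n : ℕ} {A B : Matrix (Fin n) (Fin n) ℂ} (hA : A.IsHermitian)
    (hB : B.IsHermitian) (K : Matrix (Fin n) (Fin n) ℂ) (t : ℝ) : ℝ :=
  ∑ i, ∑ j, hA.eigenvalues i * (t * hB.eigenvalues j) /
    (hA.eigenvalues i + t * hB.eigenvalues j) * eigenWeight hA hB K i j

lemma parallel_mul_norm_add_sq_le {a b : ℝ} (ha : 0 < a) (hb : 0 < b) (x y : ℂ) :
    a * b / (a + b) * ‖x + y‖ ^ 2 ≤ a * ‖x‖ ^ 2 + b * ‖y‖ ^ 2 := by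
  have h1 : ‖x + y‖ ^ 2 ≤ (‖x‖ + ‖y‖) ^ 2 := by gcongr; exact norm_add_le x y
  calc a * b / (a + b) * ‖x + y‖ ^ 2 ≤ a * b / (a + b) * (‖x‖ + ‖y‖) ^ 2 := by gcongr
    _ ≤ a * ‖x‖ ^ 2 + b * ‖y‖ ^ 2 := by
      rw [div_mul_eq_mul_div, div_le_iff₀ (by positivity)]
      nlinarith [sq_nonneg (a * ‖x‖ - b * ‖y‖)]

lemma parallelForm_add_le {n : ℕ} {A B : Matrix (Fin n) (Fin n) ℂ} (hA : A.PosDef)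
    (hB : B.PosDef) (X Y : Matrix (Fin n) (Fin n) ℂ) {t : ℝ} (ht : 0 < t) :
    parallelForm hA.1 hB.1 (X + Y) t ≤ trRe (Xᴴ * A * X) + t * trRe (Yᴴ * Y * B) := by
  have hX := trRe_sandwich_left hA.1 hB.1 (fun x => x) X
  have hY := trRe_sandwich_right hA.1 hB.1 (fun x => x) Y
  rw [cfc_id' ℝ A hA.1.isSelfAdjoint] at hX
  rw [cfc_id' ℝ B hB.1.isSelfAdjoint] at hY
  rw [hX, hY, parallelForm, Finset.mul_sum, ← Finset.sum_add_distrib]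
  gcongr with i
  rw [Finset.mul_sum, ← Finset.sum_add_distrib]
  gcongr with j
  rw [← mul_assoc t]
  unfold eigenWeight
  rw [mul_add, add_mul, Matrix.add_apply]
  exact parallel_mul_norm_add_sq_le (hA.eigenvalues_pos i) (mul_pos ht (hB.eigenvalues_pos j)) _ _

lemma exists_parallelForm_eq {n : ℕ} {A B : Matrix (Fin n) (Fin n) ℂ} (hA : A.PosDef)
    (hB : B.PosDef) (K : Matrix (Fin n) (Fin n) ℂ) {t : ℝ} (ht : 0 < t) :
    ∃ X Y, X + Y = K ∧
      parallelForm hA.1 hB.1 K t = trRe (Xᴴ * A * X) + t * trRe (Yᴴ * Y * B) := by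
  set U : Matrix (Fin n) (Fin n) ℂ := hA.1.eigenvectorUnitary.val with hU
  set V : Matrix (Fin n) (Fin n) ℂ := hB.1.eigenvectorUnitary.val with hV
  have hUU : Uᴴ * U = 1 := Unitary.coe_star_mul_self hA.1.eigenvectorUnitary
  have hVV : Vᴴ * V = 1 := Unitary.coe_star_mul_self hB.1.eigenvectorUnitary
  set a := hA.1.eigenvalues
  set b := hB.1.eigenvalues
  let Z : Matrix (Fin n) (Fin n) ℂ :=
    .of fun i j => ((t * b j / (a i + t * b j) : ℝ) : ℂ) * (Uᴴ * K * V) i j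
  have hZ : Uᴴ * (U * Z * Vᴴ) * V = Z := by
    calc Uᴴ * (U * Z * Vᴴ) * V = (Uᴴ * U) * Z * (Vᴴ * V) := by simp only [mul_assoc]
      _ = Z := by rw [hUU, hVV, one_mul, mul_one]
  refine ⟨U * Z * Vᴴ, K - U * Z * Vᴴ, by simp, ?_⟩
  have hX := trRe_sandwich_left hA.1 hB.1 (fun x => x) (U * Z * Vᴴ)
  have hY := trRe_sandwich_right hA.1 hB.1 (fun x => x) (K - U * Z * Vᴴ)
  rw [cfc_id' ℝ A hA.1.isSelfAdjoint] at hX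
  rw [cfc_id' ℝ B hB.1.isSelfAdjoint] at hY
  rw [hX, hY, parallelForm, Finset.mul_sum, ← Finset.sum_add_distrib]
  refine Finset.sum_congr rfl fun i _ => ?_
  rw [Finset.mul_sum, ← Finset.sum_add_distrib]
  refine Finset.sum_congr rfl fun j _ => ?_
  have hai : 0 < a i := hA.eigenvalues_pos i
  have hbj : 0 < b j := hB.eigenvalues_pos j
  have hab : 0 < a i + t * b j := by positivity
  unfold eigenWeight
  rw [← hU, ← hV, mul_sub, sub_mul, hZ, Matrix.sub_apply]
  have h1 : (Uᴴ * K * V) i j - Z i j =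
      ((a i / (a i + t * b j) : ℝ) : ℂ) * (Uᴴ * K * V) i j := by
    have h2 : (a i / (a i + t * b j) : ℝ) = 1 - t * b j / (a i + t * b j) := by
      field_simp; ring
    rw [h2]
    simp only [Z, of_apply]
    push_cast
    ring
  rw [h1]
  simp only [Z, of_apply, norm_mul, Complex.norm_real, Real.norm_eq_abs, mul_pow, sq_abs]
  change a i * (t * b j) / (a i + t * b j) * _ = a i * _ + t * (b j * _)
  field_simp
  ring

lemma posDef_convexCombination {n : ℕ} {A₁ A₂ : Matrix (Fin n) (Fin n) ℂ} (hA₁ : A₁.PosDef)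
    (hA₂ : A₂.PosDef) {s : ℝ} (hs : s ∈ Set.Icc (0 : ℝ) 1) :
    (s • A₁ + (1 - s) • A₂).PosDef := by
  rcases hs.1.eq_or_lt with rfl | h
  · simpa using hA₂
  · exact (hA₁.smul h).add_posSemidef (hA₂.posSemidef.smul (sub_nonneg.2 hs.2))

lemma parallelForm_concave {n : ℕ} {A₁ A₂ B₁ B₂ : Matrix (Fin n) (Fin n) ℂ} (hA₁ : A₁.PosDef)
    (hA₂ : A₂.PosDef) (hB₁ : B₁.PosDef) (hB₂ : B₂.PosDef) (K : Matrix (Fin n) (Fin n) ℂ)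
    {s : ℝ} (hs : s ∈ Set.Icc (0 : ℝ) 1) {t : ℝ} (ht : 0 < t) :
    s * parallelForm hA₁.1 hB₁.1 K t + (1 - s) * parallelForm hA₂.1 hB₂.1 K t ≤
      parallelForm (posDef_convexCombination hA₁ hA₂ hs).1
        (posDef_convexCombination hB₁ hB₂ hs).1 K t := by
  obtain ⟨X, Y, rfl, h⟩ := exists_parallelForm_eq (posDef_convexCombination hA₁ hA₂ hs)
    (posDef_convexCombination hB₁ hB₂ hs) K ht
  have h1 := mul_le_mul_of_nonneg_left (parallelForm_add_le hA₁ hB₁ X Y ht) hs.1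
  have h2 := mul_le_mul_of_nonneg_left (parallelForm_add_le hA₂ hB₂ X Y ht) (sub_nonneg.2 hs.2)
  rw [h]
  simp only [mul_add, add_mul, Matrix.mul_smul, Matrix.smul_mul, trRe_add, trRe_smul] at h1 h2 ⊢
  linarith

open MeasureTheory in
lemma trRe_mpow_sandwich_eq_integral {n : ℕ} {A B : Matrix (Fin n) (Fin n) ℂ} (hA : A.PosDef)
    (hB : B.PosDef) (K : Matrix (Fin n) (Fin n) ℂ) {p : ℝ} (hp : p ∈ Set.Ioo (0 : ℝ) 1) :
    IntegrableOn (fun t => t ^ (p - 2) * parallelForm hA.1 hB.1 K t) (Set.Ioi 0) ∧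
      trRe (Kᴴ * mpow A p * K * mpow B (1 - p)) =
        (∫ t in Set.Ioi 0, Real.rpowIntegrand₀₁ p t 1)⁻¹ *
          ∫ t in Set.Ioi 0, t ^ (p - 2) * parallelForm hA.1 hB.1 K t := by
  set a := hA.1.eigenvalues
  set b := hB.1.eigenvalues
  set w := eigenWeight hA.1 hB.1 K
  have ha : ∀ i, 0 < a i := hA.eigenvalues_pos
  have hb : ∀ i, 0 < b i := hB.eigenvalues_pos
  have hab : ∀ i j, 0 ≤ a i / b j := fun i j => (div_pos (ha i) (hb j)).le
  have hint : ∀ i j, IntegrableOn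
      (fun t => b j * w i j * Real.rpowIntegrand₀₁ p t (a i / b j)) (Set.Ioi 0) := fun i j =>
    (Real.integrableOn_rpowIntegrand₀₁_Ioi hp (hab i j)).const_mul _
  have heq : Set.EqOn (fun t => ∑ i, ∑ j, b j * w i j * Real.rpowIntegrand₀₁ p t (a i / b j))
      (fun t => t ^ (p - 2) * parallelForm hA.1 hB.1 K t) (Set.Ioi 0) := by
    intro t ht
    have ht : 0 < t := ht
    simp only [parallelForm, Finset.mul_sum]
    refine Finset.sum_congr rfl fun i _ => Finset.sum_congr rfl fun j _ => ?_
    change _ = t ^ (p - 2) * (a i * (t * b j) / (a i + t * b j) * w i j)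
    have h1 := ha i
    have h2 := hb j
    have h3 : t ^ (p - 1) = t ^ (p - 2) * t := by
      rw [← Real.rpow_add_one ht.ne']; congr 1; ring
    rw [Real.rpowIntegrand₀₁_eq_pow_div hp ht.le (hab i j), h3]
    have h4 : t + a i / b j = (a i + t * b j) / b j := by field_simp; ring
    have h5 : 0 < a i + t * b j := by positivity
    rw [h4]
    field_simp
  have hsum : IntegrableOn
      (fun t => ∑ i, ∑ j, b j * w i j * Real.rpowIntegrand₀₁ p t (a i / b j)) (Set.Ioi 0) :=
    integrable_finsetSum _ fun i _ => integrable_finsetSum _ fun j _ => hint i j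
  refine ⟨hsum.congr_fun heq measurableSet_Ioi, ?_⟩
  rw [← setIntegral_congr_fun measurableSet_Ioi heq,
    integral_finsetSum _ fun i _ => integrable_finsetSum _ fun j _ => hint i j]
  unfold mpow
  rw [trRe_cfc_sandwich hA.1 hB.1, Finset.mul_sum]
  refine Finset.sum_congr rfl fun i _ => ?_
  rw [integral_finsetSum _ fun j _ => hint i j, Finset.mul_sum]
  refine Finset.sum_congr rfl fun j _ => ?_
  rw [integral_const_mul, mul_left_comm, ← Real.rpow_eq_const_mul_integral hp (hab i j),
    Real.div_rpow (ha i).le (hb j).le, Real.rpow_sub (hb j), Real.rpow_one]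
  change a i ^ p * (b j / b j ^ p) * w i j = _
  ring

lemma mpow_one {n : ℕ} {A : Matrix (Fin n) (Fin n) ℂ} (hA : A.IsHermitian) : mpow A 1 = A := by
  simp only [mpow, Real.rpow_one]
  exact cfc_id' ℝ A hA.isSelfAdjoint

lemma mpow_zero {n : ℕ} {A : Matrix (Fin n) (Fin n) ℂ} (hA : A.IsHermitian) : mpow A 0 = 1 := by
  simp only [mpow, Real.rpow_zero]
  exact cfc_const_one ℝ A hA.isSelfAdjoint

/-- **Lieb's concavity theorem**. -/
lemma lieb_concavity {n : ℕ} {A₁ A₂ B₁ B₂ : Matrix (Fin n) (Fin n) ℂ} (hA₁ : A₁.PosDef)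
    (hA₂ : A₂.PosDef) (hB₁ : B₁.PosDef) (hB₂ : B₂.PosDef) (K : Matrix (Fin n) (Fin n) ℂ)
    {p : ℝ} (hp : p ∈ Set.Ioc (0 : ℝ) 1) {s : ℝ} (hs : s ∈ Set.Icc (0 : ℝ) 1) :
    s * trRe (Kᴴ * mpow A₁ p * K * mpow B₁ (1 - p)) +
        (1 - s) * trRe (Kᴴ * mpow A₂ p * K * mpow B₂ (1 - p)) ≤
      trRe (Kᴴ * mpow (s • A₁ + (1 - s) • A₂) p * K *
        mpow (s • B₁ + (1 - s) • B₂) (1 - p)) := by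
  have hA := posDef_convexCombination hA₁ hA₂ hs
  have hB := posDef_convexCombination hB₁ hB₂ hs
  rcases hp.2.eq_or_lt with rfl | hp1
  · rw [sub_self, mpow_zero hB₁.1, mpow_zero hB₂.1, mpow_zero hB.1, mpow_one hA₁.1,
      mpow_one hA₂.1, mpow_one hA.1]
    simp [mul_add, add_mul, trRe_add, trRe_smul]
  · have hp' : p ∈ Set.Ioo (0 : ℝ) 1 := ⟨hp.1, hp1⟩
    obtain ⟨i₁, e₁⟩ := trRe_mpow_sandwich_eq_integral hA₁ hB₁ K hp'
    obtain ⟨i₂, e₂⟩ := trRe_mpow_sandwich_eq_integral hA₂ hB₂ K hp'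
    obtain ⟨i, e⟩ := trRe_mpow_sandwich_eq_integral hA hB K hp'
    rw [e₁, e₂, e, mul_left_comm, mul_left_comm (1 - s), ← mul_add,
      ← MeasureTheory.integral_const_mul, ← MeasureTheory.integral_const_mul,
      ← MeasureTheory.integral_add (i₁.const_mul _) (i₂.const_mul _)]
    refine mul_le_mul_of_nonneg_left ?_
      (inv_nonneg.2 (Real.integral_rpowIntegrand₀₁_one_pos hp').le)
    refine MeasureTheory.setIntegral_mono_on ((i₁.const_mul _).add (i₂.const_mul _)) i
      measurableSet_Ioi fun t ht => ?_
    have h := mul_le_mul_of_nonneg_left (parallelForm_concave hA₁ hA₂ hB₁ hB₂ K hs ht)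
      (Real.rpow_nonneg (le_of_lt ht) (p - 2))
    linarith

lemma mpow_isHermitian {n : ℕ} (A : Matrix (Fin n) (Fin n) ℂ) (p : ℝ) :
    (mpow A p).IsHermitian :=
  cfc_predicate (R := ℝ) _ A

lemma mpow_posDef {n : ℕ} {A : Matrix (Fin n) (Fin n) ℂ} (hA : A.PosDef) (p : ℝ) :
    (mpow A p).PosDef := by
  unfold mpow
  rw [hA.1.cfc_eq, IsHermitian.cfc, Unitary.conjStarAlgAut_apply,
    Matrix.IsUnit.posDef_star_right_conjugate_iff (Unitary.isUnit_coe), posDef_diagonal_iff]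
  intro i
  simpa using Real.rpow_pos_of_pos (hA.eigenvalues_pos i) p

/-- Young's inequality for the trace. -/
lemma trRe_mul_mpow_le {n : ℕ} {M B : Matrix (Fin n) (Fin n) ℂ} (hM : M.PosDef) (hB : B.PosDef)
    {p : ℝ} (hp : p ∈ Set.Ioc (0 : ℝ) 1) :
    trRe (M * mpow B (1 - p)) ≤ p * trRe (mpow M (1 / p)) + (1 - p) * trRe B := by
  have h0 := trRe_cfc_sandwich hM.1 hB.1 (fun x => x) (fun x => x ^ (1 - p)) 1
  have h1 := trRe_sandwich_left hM.1 hB.1 (fun x => x ^ (1 / p)) 1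
  have h2 := trRe_sandwich_right hM.1 hB.1 (fun x => x) 1
  rw [cfc_id' ℝ M hM.1.isSelfAdjoint] at h0
  rw [cfc_id' ℝ B hB.1.isSelfAdjoint] at h2
  simp only [conjTranspose_one, one_mul, mul_one] at h0 h1 h2
  unfold mpow
  rw [h0, h1, h2, Finset.mul_sum, Finset.mul_sum, ← Finset.sum_add_distrib]
  gcongr with i
  rw [Finset.mul_sum, Finset.mul_sum, ← Finset.sum_add_distrib]
  gcongr with j
  have hm := hM.eigenvalues_pos i
  have hb := hB.eigenvalues_pos j
  have h := Real.geom_mean_le_arith_mean2_weighted hp.1.le (sub_nonneg.2 hp.2)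
    (Real.rpow_nonneg hm.le (1 / p)) hb.le (by ring)
  rw [← Real.rpow_mul hm.le, one_div_mul_cancel hp.1.ne', Real.rpow_one] at h
  have := mul_le_mul_of_nonneg_right h (eigenWeight_nonneg hM.1 hB.1 1 i j)
  rw [one_div] at *
  linarith

lemma mul_mpow_mpow_one_div {n : ℕ} {M : Matrix (Fin n) (Fin n) ℂ} (hM : M.PosDef)
    {p : ℝ} (hp : p ∈ Set.Ioc (0 : ℝ) 1) :
    M * mpow (mpow M (1 / p)) (1 - p) = mpow M (1 / p) := by
  have hp0 := hp.1
  have c1 : Continuous fun x : ℝ => x ^ (1 / p) := Real.continuous_rpow_const (by positivity)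
  have c2 : Continuous fun x : ℝ => x ^ (1 - p) :=
    Real.continuous_rpow_const (sub_nonneg.2 hp.2)
  have hsa := hM.1.isSelfAdjoint
  unfold mpow
  rw [← cfc_comp' (fun x : ℝ => x ^ (1 - p)) (fun x : ℝ => x ^ (1 / p)) M c2.continuousOn
    c1.continuousOn hsa]
  nth_rewrite 1 [← cfc_id' ℝ M hsa]
  rw [← cfc_mul (fun x : ℝ => x) (fun x : ℝ => (x ^ (1 / p)) ^ (1 - p)) M continuousOn_id (c2.comp c1).continuousOn]
  refine cfc_congr fun x hx => ?_
  rw [hM.1.spectrum_real_eq_range_eigenvalues] at hx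
  obtain ⟨i, rfl⟩ := hx
  have hm := hM.eigenvalues_pos i
  rw [← Real.rpow_mul hm.le]
  nth_rewrite 1 [← Real.rpow_one (hM.1.eigenvalues i)]
  rw [← Real.rpow_add hm]
  congr 1
  field_simp
  ring

/-- Epstein's concavity theorem, with an additive positive definite perturbation. -/
lemma trRe_mpow_one_div_concave {n : ℕ} {C : Matrix (Fin n) (Fin n) ℂ} (hC : C.PosDef)
    (H : Matrix (Fin n) (Fin n) ℂ) {A₁ A₂ : Matrix (Fin n) (Fin n) ℂ} (hA₁ : A₁.PosDef)
    (hA₂ : A₂.PosDef) {p : ℝ} (hp : p ∈ Set.Ioc (0 : ℝ) 1) {s : ℝ}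
    (hs : s ∈ Set.Icc (0 : ℝ) 1) :
    s * trRe (mpow (C + Hᴴ * mpow A₁ p * H) (1 / p)) +
        (1 - s) * trRe (mpow (C + Hᴴ * mpow A₂ p * H) (1 / p)) ≤
      trRe (mpow (C + Hᴴ * mpow (s • A₁ + (1 - s) • A₂) p * H) (1 / p)) := by
  have hM : ∀ {A : Matrix (Fin n) (Fin n) ℂ}, A.PosDef → (C + Hᴴ * mpow A p * H).PosDef :=
    fun hA => hC.add_posSemidef ((mpow_posDef hA p).posSemidef.conjTranspose_mul_mul_same H)
  have hB₁ := mpow_posDef (hM hA₁) (1 / p)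
  have hB₂ := mpow_posDef (hM hA₂) (1 / p)
  have e₁ := congrArg trRe (mul_mpow_mpow_one_div (hM hA₁) hp)
  have e₂ := congrArg trRe (mul_mpow_mpow_one_div (hM hA₂) hp)
  have hY := trRe_mul_mpow_le (hM (posDef_convexCombination hA₁ hA₂ hs))
    (posDef_convexCombination hB₁ hB₂ hs) hp
  have hLH := lieb_concavity hA₁ hA₂ hB₁ hB₂ H hp hs
  set D := mpow C (1 / 2)
  have hD : Dᴴ * mpow 1 p * D = C := by
    have h1 : mpow (1 : Matrix (Fin n) (Fin n) ℂ) p = 1 := by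
      unfold mpow
      rw [← map_one (algebraMap ℝ (Matrix (Fin n) (Fin n) ℂ)), cfc_algebraMap]
      simp
    have c : Continuous fun x : ℝ => x ^ (1 / 2 : ℝ) := Real.continuous_rpow_const (by norm_num)
    rw [h1, mul_one, (mpow_isHermitian C (1 / 2)).eq]
    simp only [D, mpow]
    rw [← cfc_mul _ _ C c.continuousOn c.continuousOn]
    conv_rhs => rw [← cfc_id' ℝ C hC.1.isSelfAdjoint]
    refine cfc_congr fun x hx => ?_
    rw [hC.1.spectrum_real_eq_range_eigenvalues] at hx
    obtain ⟨i, rfl⟩ := hx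
    rw [← Real.rpow_add (hC.eigenvalues_pos i)]
    norm_num
  have hLC := lieb_concavity (PosDef.one (n := Fin n) (R := ℂ)) PosDef.one hB₁ hB₂ D hp hs
  rw [← add_smul, add_sub_cancel, one_smul, hD] at hLC
  simp only [add_mul, trRe_add, trRe_smul] at e₁ e₂ hY
  refine le_of_mul_le_mul_left ?_ hp.1
  linear_combination hLC + hLH + hY - s * e₁ - (1 - s) * e₂

/-- Concavity of h_q(A) = log_q(φ_q(A)) for q ∈ (1,2] and positive definite L. -/
theorem stmt8 {n : ℕ} (q : ℝ) (hq : q ∈ Set.Ioc (1 : ℝ) 2)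
    (H L : Matrix (Fin n) (Fin n) ℂ) (hH : (1 - Hᴴ * H).PosSemidef) (hL : L.PosDef)
    (A₁ A₂ : Matrix (Fin n) (Fin n) ℂ) (hA₁ : A₁.PosDef) (hA₂ : A₂.PosDef)
    (t : ℝ) (ht : t ∈ Set.Icc (0 : ℝ) 1) :
    logq q (phiq q H L (t • A₁ + (1 - t) • A₂))
      ≥ t * logq q (phiq q H L A₁) + (1 - t) * logq q (phiq q H L A₂) := by
  have hp : q - 1 ∈ Set.Ioc (0 : ℝ) 1 := ⟨by linarith [hq.1], by linarith [hq.2]⟩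
  have hC : (1 - Hᴴ * H + (q - 1) • L).PosDef := (hL.smul hp.1).posSemidef_add hH
  have hnonneg : ∀ {A : Matrix (Fin n) (Fin n) ℂ}, A.PosDef → 0 ≤ phiq q H L A := fun hA =>
    (Complex.le_def.1 (mpow_posDef (hC.add_posSemidef ((mpow_posDef hA (q - 1)).posSemidef
      |>.conjTranspose_mul_mul_same H)) (1 / (q - 1))).posSemidef.trace_nonneg).1
  have hφ₁ := hnonneg hA₁
  have hφ₂ := hnonneg hA₂
  have ht' := sub_nonneg.2 ht.2
  have hconc := trRe_mpow_one_div_concave hC H hA₁ hA₂ hp ht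
  have hpow := (Real.concaveOn_rpow hp.1.le hp.2).2 hφ₁ hφ₂ ht.1 ht' (by ring)
  simp only [smul_eq_mul] at hpow
  have hmono := Real.rpow_le_rpow (add_nonneg (mul_nonneg ht.1 hφ₁) (mul_nonneg ht' hφ₂))
    hconc hp.1.le
  have hle := hpow.trans hmono
  unfold logq
  rw [ge_iff_le, ← mul_div_assoc, ← mul_div_assoc, ← add_div]
  refine div_le_div_of_nonneg_right ?_ hp.1.le
  change _ ≤ phiq q H L (t • A₁ + (1 - t) • A₂) ^ (q - 1) at hle
  linarith
end

section
/- Let q ∈ [2,3], let H be an n×n contraction (H*H ≤ I), and let L be an n×n positive definite matrix. Then the function h_q(A) = log_q(Tr[(I − H*H + (q−1)L + H* A^{q−1} H)^{1/(q−1)}]) is convex on n×n positive definite matrices A. -/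
open Matrix ComplexOrder

open MeasureTheory

section SpectralSum

variable {n : ℕ} {A B : Matrix (Fin n) (Fin n) ℂ}

/-- The matrix `K` expressed in the eigenbases of `A` (rows) and `B` (columns). -/
noncomputable def overlap (hA : A.IsHermitian) (hB : B.IsHermitian)
    (K : Matrix (Fin n) (Fin n) ℂ) : Matrix (Fin n) (Fin n) ℂ :=
  star (hA.eigenvectorUnitary : Matrix (Fin n) (Fin n) ℂ) * K *
    (hB.eigenvectorUnitary : Matrix (Fin n) (Fin n) ℂ)

/-- The quadratic form at `K` of the function `f` of the commuting operators of left
multiplication by `A` and right multiplication by `B`. -/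
noncomputable def spectralSum (hA : A.IsHermitian) (hB : B.IsHermitian)
    (K : Matrix (Fin n) (Fin n) ℂ) (f : ℝ → ℝ → ℝ) : ℝ :=
  ∑ i, ∑ j, ‖overlap hA hB K i j‖ ^ 2 * f (hA.eigenvalues i) (hB.eigenvalues j)

lemma overlap_surjective (hA : A.IsHermitian) (hB : B.IsHermitian) :
    Function.Surjective (overlap hA hB) := by
  intro X
  refine ⟨(hA.eigenvectorUnitary : Matrix (Fin n) (Fin n) ℂ) * X *
    star (hB.eigenvectorUnitary : Matrix (Fin n) (Fin n) ℂ), ?_⟩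
  have h₁ : star (hA.eigenvectorUnitary : Matrix (Fin n) (Fin n) ℂ) * hA.eigenvectorUnitary = 1 :=
    Unitary.coe_star_mul_self _
  have h₂ : star (hB.eigenvectorUnitary : Matrix (Fin n) (Fin n) ℂ) * hB.eigenvectorUnitary = 1 :=
    Unitary.coe_star_mul_self _
  unfold overlap
  calc _ = (star (hA.eigenvectorUnitary : Matrix (Fin n) (Fin n) ℂ) * hA.eigenvectorUnitary) * X *
        (star (hB.eigenvectorUnitary : Matrix (Fin n) (Fin n) ℂ) * hB.eigenvectorUnitary) := by
        simp only [mul_assoc]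
    _ = X := by rw [h₁, h₂, one_mul, mul_one]

lemma trace_mul_cfc_mul_cfc (hA : A.IsHermitian) (hB : B.IsHermitian)
    (X Y : Matrix (Fin n) (Fin n) ℂ) (f g : ℝ → ℝ) :
    (Xᴴ * cfc f A * Y * cfc g B).trace =
      ∑ i, ∑ j, star (overlap hA hB X i j) * overlap hA hB Y i j *
        ((f (hA.eigenvalues i) * g (hB.eigenvalues j) : ℝ) : ℂ) := by
  have h : (Xᴴ * cfc f A * Y * cfc g B).trace =
      ((overlap hA hB X)ᴴ * diagonal (Complex.ofReal ∘ f ∘ hA.eigenvalues) * overlap hA hB Y *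
        diagonal (Complex.ofReal ∘ g ∘ hB.eigenvalues)).trace := by
    rw [hA.cfc_eq, hB.cfc_eq, IsHermitian.cfc, IsHermitian.cfc, Unitary.conjStarAlgAut_apply,
      Unitary.conjStarAlgAut_apply, ← mul_assoc, ← mul_assoc, trace_mul_comm]
    simp only [overlap, conjTranspose_mul, star_eq_conjTranspose, conjTranspose_conjTranspose,
      mul_assoc]
    rfl
  rw [h, Finset.sum_comm]
  simp only [trace, diag_apply, mul_diagonal]
  refine Finset.sum_congr rfl fun j _ => ?_
  rw [mul_assoc, mul_apply, Finset.sum_mul]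
  refine Finset.sum_congr rfl fun i _ => ?_
  simp only [diagonal_mul, conjTranspose_apply, Function.comp_apply]
  push_cast
  ring

lemma trRe_mul_cfc_mul_cfc (hA : A.IsHermitian) (hB : B.IsHermitian)
    (K : Matrix (Fin n) (Fin n) ℂ) (f g : ℝ → ℝ) :
    trRe (Kᴴ * cfc f A * K * cfc g B) = spectralSum hA hB K fun a b => f a * g b := by
  rw [trRe, trace_mul_cfc_mul_cfc hA hB, spectralSum, Complex.re_sum]
  refine Finset.sum_congr rfl fun i _ => ?_
  rw [Complex.re_sum]
  refine Finset.sum_congr rfl fun j _ => ?_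
  rw [Complex.re_mul_ofReal, Complex.star_def, Complex.conj_mul', ← Complex.ofReal_pow,
    Complex.ofReal_re]

lemma spectralSum_congr (hA : A.PosDef) (hB : B.PosDef) (K : Matrix (Fin n) (Fin n) ℂ)
    {f g : ℝ → ℝ → ℝ} (h : ∀ a b, 0 < a → 0 < b → f a b = g a b) :
    spectralSum hA.1 hB.1 K f = spectralSum hA.1 hB.1 K g := by
  simp only [spectralSum]
  exact Finset.sum_congr rfl fun i _ => Finset.sum_congr rfl fun j _ => by
    rw [h _ _ (hA.eigenvalues_pos i) (hB.eigenvalues_pos j)]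

/-- The affine minorants whose supremum is the spectral sum of `a ^ 2 / (α * a + β * b)`. -/
noncomputable def affineMinorant (α β : ℝ) (K X A B : Matrix (Fin n) (Fin n) ℂ) : ℝ :=
  2 * trRe (Xᴴ * A * K) - α * trRe (Xᴴ * A * X) - β * trRe (Xᴴ * X * B)

lemma affineMinorant_convexComb (α β t : ℝ) (K X A₁ A₂ B₁ B₂ : Matrix (Fin n) (Fin n) ℂ) :
    affineMinorant α β K X (t • A₁ + (1 - t) • A₂) (t • B₁ + (1 - t) • B₂) =
      t * affineMinorant α β K X A₁ B₁ + (1 - t) * affineMinorant α β K X A₂ B₂ := by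
  simp only [affineMinorant, trRe, mul_add, add_mul, mul_smul_comm, smul_mul_assoc, trace_add,
    trace_smul, Complex.add_re, Complex.smul_re, smul_eq_mul]
  ring

lemma affineMinorant_eq_sum (hA : A.IsHermitian) (hB : B.IsHermitian) (α β : ℝ)
    (K X : Matrix (Fin n) (Fin n) ℂ) :
    affineMinorant α β K X A B = ∑ i, ∑ j,
      (2 * (star (overlap hA hB X i j) * overlap hA hB K i j).re * hA.eigenvalues i -
        (α * hA.eigenvalues i + β * hB.eigenvalues j) * ‖overlap hA hB X i j‖ ^ 2) := by
  have hA' : IsSelfAdjoint A := hA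
  have hB' : IsSelfAdjoint B := hB
  have h₁ := trace_mul_cfc_mul_cfc hA hB X K id (fun _ => 1)
  have h₂ := trRe_mul_cfc_mul_cfc hA hB X id (fun _ => 1)
  have h₃ := trRe_mul_cfc_mul_cfc hA hB X (fun _ => 1) id
  rw [cfc_id ℝ A, cfc_const_one ℝ B, mul_one] at h₁ h₂
  rw [cfc_id ℝ B, cfc_const_one ℝ A, mul_one] at h₃
  rw [affineMinorant, h₂, h₃, trRe, h₁, Complex.re_sum, spectralSum, spectralSum]
  simp only [Complex.re_sum, Finset.mul_sum, ← Finset.sum_sub_distrib]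
  refine Finset.sum_congr rfl fun i _ => Finset.sum_congr rfl fun j _ => ?_
  rw [Complex.re_mul_ofReal]
  simp only [id]
  ring

lemma affineMinorant_le_spectralSum (hA : A.PosDef) (hB : B.PosDef) {α β : ℝ}
    (h : ∀ a b : ℝ, 0 < a → 0 < b → 0 < α * a + β * b) (K X : Matrix (Fin n) (Fin n) ℂ) :
    affineMinorant α β K X A B ≤
      spectralSum hA.1 hB.1 K fun a b => a ^ 2 / (α * a + β * b) := by
  rw [affineMinorant_eq_sum hA.1 hB.1, spectralSum]
  refine Finset.sum_le_sum fun i _ => Finset.sum_le_sum fun j _ => ?_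
  have hd := h _ _ (hA.eigenvalues_pos i) (hB.eigenvalues_pos j)
  have ha := hA.eigenvalues_pos i
  set a := hA.1.eigenvalues i
  set d := α * a + β * hB.1.eigenvalues j
  set x := overlap hA.1 hB.1 X i j
  set w := overlap hA.1 hB.1 K i j
  have hre : (star x * w).re ≤ ‖x‖ * ‖w‖ := by
    simpa using Complex.re_le_norm (star x * w)
  have hsq : 2 * (‖x‖ * ‖w‖) * a - d * ‖x‖ ^ 2 ≤ ‖w‖ ^ 2 * (a ^ 2 / d) := by
    rw [← mul_div_assoc, le_div_iff₀ hd]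
    nlinarith [sq_nonneg (‖w‖ * a - d * ‖x‖)]
  refine le_trans ?_ hsq
  gcongr

lemma exists_affineMinorant_eq_spectralSum (hA : A.PosDef) (hB : B.PosDef) {α β : ℝ}
    (h : ∀ a b : ℝ, 0 < a → 0 < b → 0 < α * a + β * b) (K : Matrix (Fin n) (Fin n) ℂ) :
    ∃ X, affineMinorant α β K X A B =
      spectralSum hA.1 hB.1 K fun a b => a ^ 2 / (α * a + β * b) := by
  obtain ⟨X, hX⟩ := overlap_surjective hA.1 hB.1 (Matrix.of fun i j =>
    ((hA.1.eigenvalues i / (α * hA.1.eigenvalues i + β * hB.1.eigenvalues j) : ℝ) : ℂ) *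
      overlap hA.1 hB.1 K i j)
  refine ⟨X, ?_⟩
  rw [affineMinorant_eq_sum hA.1 hB.1, spectralSum, hX]
  refine Finset.sum_congr rfl fun i _ => Finset.sum_congr rfl fun j _ => ?_
  have hd := h _ _ (hA.eigenvalues_pos i) (hB.eigenvalues_pos j)
  simp only [of_apply, Complex.star_def, map_mul, Complex.conj_ofReal, mul_assoc, norm_mul]
  rw [Complex.re_ofReal_mul, Complex.conj_mul', ← Complex.ofReal_pow, Complex.ofReal_re,
    Complex.norm_real, mul_pow, Real.norm_eq_abs, sq_abs]
  field_simp
  ring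

end SpectralSum

section JointConvexity

variable {n : ℕ}

lemma posDef_convexComb {A₁ A₂ : Matrix (Fin n) (Fin n) ℂ} (hA₁ : A₁.PosDef) (hA₂ : A₂.PosDef)
    {t : ℝ} (ht : t ∈ Set.Icc (0 : ℝ) 1) : (t • A₁ + (1 - t) • A₂).PosDef := by
  rcases ht.1.eq_or_lt with rfl | h₀
  · simpa using hA₂
  · exact (hA₁.smul h₀).add_posSemidef (hA₂.posSemidef.smul (sub_nonneg.2 ht.2))

/-- The function `f` of two commuting operators is jointly convex: the associated quadratic form
is jointly convex in positive definite `A` and `B`. -/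
def SpectralConvex (n : ℕ) (f : ℝ → ℝ → ℝ) : Prop :=
  ∀ (K A₁ A₂ B₁ B₂ : Matrix (Fin n) (Fin n) ℂ) (hA₁ : A₁.PosDef) (hA₂ : A₂.PosDef)
    (hB₁ : B₁.PosDef) (hB₂ : B₂.PosDef) (t : ℝ) (ht : t ∈ Set.Icc (0 : ℝ) 1),
    spectralSum (posDef_convexComb hA₁ hA₂ ht).1 (posDef_convexComb hB₁ hB₂ ht).1 K f ≤
      t * spectralSum hA₁.1 hB₁.1 K f + (1 - t) * spectralSum hA₂.1 hB₂.1 K f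

lemma SpectralConvex.congr {f g : ℝ → ℝ → ℝ} (hf : SpectralConvex n f)
    (h : ∀ a b, 0 < a → 0 < b → f a b = g a b) : SpectralConvex n g := by
  intro K A₁ A₂ B₁ B₂ hA₁ hA₂ hB₁ hB₂ t ht
  rw [← spectralSum_congr (posDef_convexComb hA₁ hA₂ ht) (posDef_convexComb hB₁ hB₂ ht) K h,
    ← spectralSum_congr hA₁ hB₁ K h, ← spectralSum_congr hA₂ hB₂ K h]
  exact hf K A₁ A₂ B₁ B₂ hA₁ hA₂ hB₁ hB₂ t ht

lemma spectralConvex_sq_div {α β : ℝ} (h : ∀ a b : ℝ, 0 < a → 0 < b → 0 < α * a + β * b) :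
    SpectralConvex n fun a b => a ^ 2 / (α * a + β * b) := by
  intro K A₁ A₂ B₁ B₂ hA₁ hA₂ hB₁ hB₂ t ht
  obtain ⟨X, hX⟩ := exists_affineMinorant_eq_spectralSum (posDef_convexComb hA₁ hA₂ ht)
    (posDef_convexComb hB₁ hB₂ ht) h K
  rw [← hX, affineMinorant_convexComb]
  exact add_le_add
    (mul_le_mul_of_nonneg_left (affineMinorant_le_spectralSum hA₁ hB₁ h K X) ht.1)
    (mul_le_mul_of_nonneg_left (affineMinorant_le_spectralSum hA₂ hB₂ h K X) (sub_nonneg.2 ht.2))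

lemma SpectralConvex.const_mul {f : ℝ → ℝ → ℝ} (hf : SpectralConvex n f) {c : ℝ} (hc : 0 ≤ c) :
    SpectralConvex n fun a b => c * f a b := by
  intro K A₁ A₂ B₁ B₂ hA₁ hA₂ hB₁ hB₂ t ht
  have h := mul_le_mul_of_nonneg_left (hf K A₁ A₂ B₁ B₂ hA₁ hA₂ hB₁ hB₂ t ht) hc
  have hs : ∀ {A B : Matrix (Fin n) (Fin n) ℂ} (hA : A.IsHermitian) (hB : B.IsHermitian),
      spectralSum hA hB K (fun a b => c * f a b) = c * spectralSum hA hB K f := by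
    intro A B hA hB
    simp only [spectralSum, Finset.mul_sum]
    exact Finset.sum_congr rfl fun i _ => Finset.sum_congr rfl fun j _ => by ring
  rw [hs, hs, hs]
  linarith

lemma SpectralConvex.integral {μ : Measure ℝ} {f : ℝ → ℝ → ℝ → ℝ}
    (hf : ∀ᵐ s ∂μ, SpectralConvex n (f s))
    (hf_int : ∀ a b, 0 < a → 0 < b → Integrable (fun s => f s a b) μ) :
    SpectralConvex n fun a b => ∫ s, f s a b ∂μ := by
  intro K A₁ A₂ B₁ B₂ hA₁ hA₂ hB₁ hB₂ t ht
  have hterm : ∀ {A B : Matrix (Fin n) (Fin n) ℂ} (hA : A.PosDef) (hB : B.PosDef) (i j : Fin n),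
      Integrable (fun s => ‖overlap hA.1 hB.1 K i j‖ ^ 2 *
        f s (hA.1.eigenvalues i) (hB.1.eigenvalues j)) μ := fun hA hB i j =>
    (hf_int _ _ (hA.eigenvalues_pos i) (hB.eigenvalues_pos j)).const_mul _
  have hi : ∀ {A B : Matrix (Fin n) (Fin n) ℂ} (hA : A.PosDef) (hB : B.PosDef),
      Integrable (fun s => spectralSum hA.1 hB.1 K (f s)) μ := fun hA hB =>
    integrable_finsetSum _ fun i _ => integrable_finsetSum _ fun j _ => hterm hA hB i j
  have hs : ∀ {A B : Matrix (Fin n) (Fin n) ℂ} (hA : A.PosDef) (hB : B.PosDef),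
      spectralSum hA.1 hB.1 K (fun a b => ∫ s, f s a b ∂μ) =
        ∫ s, spectralSum hA.1 hB.1 K (f s) ∂μ := by
    intro A B hA hB
    simp only [spectralSum]
    rw [integral_finsetSum _ fun i _ => integrable_finsetSum _ fun j _ => hterm hA hB i j]
    refine Finset.sum_congr rfl fun i _ => ?_
    rw [integral_finsetSum _ fun j _ => hterm hA hB i j]
    exact Finset.sum_congr rfl fun j _ => (integral_const_mul _ _).symm
  rw [hs (posDef_convexComb hA₁ hA₂ ht) (posDef_convexComb hB₁ hB₂ ht), hs hA₁ hB₁, hs hA₂ hB₂,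
    ← integral_const_mul, ← integral_const_mul,
    ← integral_add ((hi hA₁ hB₁).const_mul _) ((hi hA₂ hB₂).const_mul _)]
  refine integral_mono_ae (hi (posDef_convexComb hA₁ hA₂ ht) (posDef_convexComb hB₁ hB₂ ht))
    (((hi hA₁ hB₁).const_mul _).add ((hi hA₂ hB₂).const_mul _)) ?_
  filter_upwards [hf] with s hs
  exact hs K A₁ A₂ B₁ B₂ hA₁ hA₂ hB₁ hB₂ t ht

/-- **Ando's convexity theorem**, for exponents summing to one. -/
lemma spectralConvex_rpow_mul_rpow {p : ℝ} (hp : p ∈ Set.Icc (1 : ℝ) 2) :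
    SpectralConvex n fun a b => a ^ p * b ^ (1 - p) := by
  rcases hp.1.eq_or_lt with rfl | h₁
  · refine (spectralConvex_sq_div (α := 1) (β := 0) fun a b ha hb => by simpa).congr
      fun a b ha hb => ?_
    simp [pow_two, ha.ne']
  rcases hp.2.eq_or_lt with rfl | h₂
  · refine (spectralConvex_sq_div (α := 0) (β := 1) fun a b ha hb => by simpa).congr
      fun a b ha hb => ?_
    rw [show (1 : ℝ) - 2 = -1 by norm_num, Real.rpow_neg_one, Real.rpow_two]
    simp [div_eq_mul_inv]
  have hp' : p - 1 ∈ Set.Ioo (0 : ℝ) 1 := ⟨by linarith, by linarith⟩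
  obtain ⟨μ, hμ⟩ := Real.exists_measure_rpow_eq_integral_rpowIntegrand₀₁ hp'
  have hpos : ∀ a b : ℝ, 0 < a → 0 < b → a / b ∈ Set.Ici (0 : ℝ) := fun a b ha hb =>
    (div_pos ha hb).le
  refine SpectralConvex.congr (SpectralConvex.integral (μ := μ.restrict (Set.Ioi 0))
    (f := fun s a b => a * Real.rpowIntegrand₀₁ (p - 1) s (a / b)) ?_ ?_) ?_
  · filter_upwards [ae_restrict_mem measurableSet_Ioi] with s hs
    have hs : 0 < s := hs
    refine ((spectralConvex_sq_div (α := 1) (β := s) fun a b ha hb => by positivity).const_mul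
      (Real.rpow_nonneg hs.le (p - 1 - 1))).congr fun a b ha hb => ?_
    rw [Real.rpowIntegrand₀₁_eq_pow_div hp' hs.le (hpos a b ha hb)]
    field_simp
    ring
  · exact fun a b ha hb => ((hμ _ (hpos a b ha hb)).1).const_mul a
  · intro a b ha hb
    rw [integral_const_mul, ← (hμ _ (hpos a b ha hb)).2, Real.div_rpow ha.le hb.le,
      Real.rpow_sub_one ha.ne', show 1 - p = -(p - 1) by ring, Real.rpow_neg hb.le]
    field_simp

lemma trRe_mul_mpow_mul_mpow_convexComb {p : ℝ} (hp : p ∈ Set.Icc (1 : ℝ) 2)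
    (K : Matrix (Fin n) (Fin n) ℂ) {A₁ A₂ B₁ B₂ : Matrix (Fin n) (Fin n) ℂ} (hA₁ : A₁.PosDef)
    (hA₂ : A₂.PosDef) (hB₁ : B₁.PosDef) (hB₂ : B₂.PosDef) {t : ℝ} (ht : t ∈ Set.Icc (0 : ℝ) 1) :
    trRe (Kᴴ * mpow (t • A₁ + (1 - t) • A₂) p * K * mpow (t • B₁ + (1 - t) • B₂) (1 - p)) ≤
      t * trRe (Kᴴ * mpow A₁ p * K * mpow B₁ (1 - p)) +
        (1 - t) * trRe (Kᴴ * mpow A₂ p * K * mpow B₂ (1 - p)) := by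
  simp only [mpow]
  rw [trRe_mul_cfc_mul_cfc (posDef_convexComb hA₁ hA₂ ht).1 (posDef_convexComb hB₁ hB₂ ht).1,
    trRe_mul_cfc_mul_cfc hA₁.1 hB₁.1, trRe_mul_cfc_mul_cfc hA₂.1 hB₂.1]
  exact spectralConvex_rpow_mul_rpow hp K A₁ A₂ B₁ B₂ hA₁ hA₂ hB₁ hB₂ t ht

lemma trRe_mul_mpow_convexComb {p : ℝ} (hp : p ∈ Set.Icc (1 : ℝ) 2)
    {C B₁ B₂ : Matrix (Fin n) (Fin n) ℂ} (hC : C.PosSemidef) (hB₁ : B₁.PosDef) (hB₂ : B₂.PosDef)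
    {t : ℝ} (ht : t ∈ Set.Icc (0 : ℝ) 1) :
    trRe (C * mpow (t • B₁ + (1 - t) • B₂) (1 - p)) ≤
      t * trRe (C * mpow B₁ (1 - p)) + (1 - t) * trRe (C * mpow B₂ (1 - p)) := by
  open scoped MatrixOrder in
  obtain ⟨K, rfl⟩ := CStarAlgebra.nonneg_iff_eq_star_mul_self.1 hC.nonneg
  have h := trRe_mul_mpow_mul_mpow_convexComb hp K PosDef.one PosDef.one hB₁ hB₂ ht
  have h₁ : mpow (1 : Matrix (Fin n) (Fin n) ℂ) p = 1 := by
    rw [mpow, cfc_apply_one]; simp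
  rw [← add_smul, add_sub_cancel, one_smul, h₁, mul_one] at h
  exact h

end JointConvexity

section ReverseHolder

variable {n : ℕ} {X Z : Matrix (Fin n) (Fin n) ℂ}

lemma spectralSum_mul_le (hX : X.PosDef) (hZ : Z.PosDef) (K : Matrix (Fin n) (Fin n) ℂ)
    {f g : ℝ → ℝ → ℝ} (hf : ∀ a b, 0 < a → 0 < b → 0 ≤ f a b)
    (hg : ∀ a b, 0 < a → 0 < b → 0 ≤ g a b) {p q : ℝ} (hpq : p.HolderConjugate q) :
    spectralSum hX.1 hZ.1 K (fun a b => f a b * g a b) ≤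
      spectralSum hX.1 hZ.1 K (fun a b => f a b ^ p) ^ (1 / p) *
        spectralSum hX.1 hZ.1 K (fun a b => g a b ^ q) ^ (1 / q) := by
  have hf' := fun i j => hf _ _ (hX.eigenvalues_pos i) (hZ.eigenvalues_pos j)
  have hg' := fun i j => hg _ _ (hX.eigenvalues_pos i) (hZ.eigenvalues_pos j)
  have h := Real.inner_le_Lp_mul_Lq_of_nonneg (s := Finset.univ (α := Fin n × Fin n))
    (f := fun x => (‖overlap hX.1 hZ.1 K x.1 x.2‖ ^ 2) ^ p⁻¹ *
      f (hX.1.eigenvalues x.1) (hZ.1.eigenvalues x.2))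
    (g := fun x => (‖overlap hX.1 hZ.1 K x.1 x.2‖ ^ 2) ^ q⁻¹ *
      g (hX.1.eigenvalues x.1) (hZ.1.eigenvalues x.2)) hpq
    (fun x _ => mul_nonneg (by positivity) (hf' _ _))
    (fun x _ => mul_nonneg (by positivity) (hg' _ _))
  simp only [Fintype.sum_prod_type] at h
  simp only [spectralSum]
  refine (Finset.sum_congr rfl fun i _ => Finset.sum_congr rfl fun j _ => ?_).trans_le
    (h.trans_eq (congrArg₂ (fun x y => x ^ (1 / p) * y ^ (1 / q))
      (Finset.sum_congr rfl fun i _ => Finset.sum_congr rfl fun j _ => ?_)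
      (Finset.sum_congr rfl fun i _ => Finset.sum_congr rfl fun j _ => ?_)))
  · rw [mul_mul_mul_comm, ← Real.rpow_add_of_nonneg (by positivity) hpq.inv_nonneg
      hpq.symm.inv_nonneg, hpq.inv_add_inv_eq_one, Real.rpow_one]
  · rw [Real.mul_rpow (by positivity) (hf' _ _), Real.rpow_inv_rpow (by positivity) hpq.ne_zero]
  · rw [Real.mul_rpow (by positivity) (hg' _ _),
      Real.rpow_inv_rpow (by positivity) hpq.symm.ne_zero]

lemma rpow_trRe_mpow_le (hX : X.PosDef) (hZ : Z.PosDef) (hZtr : trRe Z = 1) {p : ℝ} (hp : 1 ≤ p) :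
    trRe (mpow X (1 / p)) ^ p ≤ trRe (X * mpow Z (1 - p)) := by
  have hX' : IsSelfAdjoint X := hX.1
  have hZ' : IsSelfAdjoint Z := hZ.1
  rcases hp.eq_or_lt with rfl | hp
  · simp only [mpow, div_one, Real.rpow_one, sub_self, Real.rpow_zero]
    rw [cfc_id' ℝ X, cfc_const_one ℝ Z, mul_one]
  have h₁ := trRe_mul_cfc_mul_cfc hX.1 hZ.1 1 (fun x => x ^ (1 / p)) (fun _ => 1)
  have h₂ := trRe_mul_cfc_mul_cfc hX.1 hZ.1 1 id (fun x => x ^ (1 - p))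
  have h₃ := trRe_mul_cfc_mul_cfc hX.1 hZ.1 1 (fun _ => 1) id
  rw [cfc_const_one ℝ Z] at h₁
  rw [cfc_id ℝ X] at h₂
  rw [cfc_id ℝ Z, cfc_const_one ℝ X] at h₃
  simp only [conjTranspose_one, one_mul, mul_one] at h₁ h₂ h₃
  have hp₀ : 0 < p := by linarith
  have hpq := Real.HolderConjugate.conjExponent hp
  have hq : p.conjExponent = p / (p - 1) := rfl
  have hp₁ : p - 1 ≠ 0 := by linarith
  have h := spectralSum_mul_le hX hZ 1 (f := fun a b => a ^ (1 / p) * b ^ ((1 - p) / p))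
    (g := fun _ b => b ^ ((p - 1) / p)) (fun a b ha hb => by positivity)
    (fun a b ha hb => by positivity) hpq
  rw [spectralSum_congr hX hZ 1 (f := fun a b => a ^ (1 / p) * b ^ ((1 - p) / p) * b ^ ((p - 1) / p))
      (g := fun a _ => a ^ (1 / p)) fun a b ha hb => ?_,
    spectralSum_congr hX hZ 1 (f := fun a b => (a ^ (1 / p) * b ^ ((1 - p) / p)) ^ p)
      (g := fun a b => id a * b ^ (1 - p)) fun a b ha hb => ?_,
    spectralSum_congr hX hZ 1 (f := fun _ b => (b ^ ((p - 1) / p)) ^ p.conjExponent)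
      (g := fun _ b => id b) fun a b ha hb => ?_,
    ← h₁, ← h₂, ← h₃, hZtr, Real.one_rpow, mul_one] at h
  · have hτ : 0 ≤ trRe (cfc (fun x : ℝ => x ^ (1 / p)) X) := by
      rw [h₁]
      exact Finset.sum_nonneg fun i _ => Finset.sum_nonneg fun j _ => mul_nonneg (by positivity)
        (Real.rpow_nonneg (hX.eigenvalues_pos i).le _)
    have hτ' : 0 ≤ trRe (X * cfc (fun x : ℝ => x ^ (1 - p)) Z) := by
      rw [h₂]
      exact Finset.sum_nonneg fun i _ => Finset.sum_nonneg fun j _ => mul_nonneg (by positivity)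
        (mul_nonneg (hX.eigenvalues_pos i).le (Real.rpow_nonneg (hZ.eigenvalues_pos j).le _))
    rw [one_div] at h
    simp only [mpow]
    exact (Real.le_rpow_inv_iff_of_pos hτ hτ' hp₀).1 (by simpa using h)
  · rw [← Real.rpow_mul hb.le, hq, div_mul_div_cancel₀ hp₀.ne', div_self hp₁, Real.rpow_one, id]
  · rw [Real.mul_rpow (by positivity) (by positivity), ← Real.rpow_mul ha.le, ← Real.rpow_mul hb.le,
      div_mul_cancel₀ _ hp₀.ne', div_mul_cancel₀ _ hp₀.ne', Real.rpow_one, id]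
  · rw [mul_assoc, ← Real.rpow_add hb, ← add_div]
    simp

lemma posDef_cfc (hX : X.PosDef) {f : ℝ → ℝ} (hf : ∀ x, 0 < x → 0 < f x) : (cfc f X).PosDef := by
  rw [hX.1.cfc_eq, IsHermitian.cfc, Unitary.conjStarAlgAut_apply,
    IsUnit.posDef_star_right_conjugate_iff (Unitary.isUnit_coe), posDef_diagonal_iff]
  intro i
  simpa using hf _ (hX.eigenvalues_pos i)

lemma pos_of_mem_spectrum (hX : X.PosDef) {x : ℝ} (hx : x ∈ spectrum ℝ X) : 0 < x := by
  obtain ⟨i, rfl⟩ := hX.1.spectrum_real_eq_range_eigenvalues ▸ hx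
  exact hX.eigenvalues_pos i

lemma exists_trRe_mul_mpow_eq [NeZero n] (hX : X.PosDef) {p : ℝ} (hp : 1 ≤ p) :
    ∃ Z : Matrix (Fin n) (Fin n) ℂ, Z.PosDef ∧ trRe Z = 1 ∧
      trRe (X * mpow Z (1 - p)) = trRe (mpow X (1 / p)) ^ p := by
  have hX' : IsSelfAdjoint X := hX.1
  have hp₀ : 0 < p := by linarith
  have hτ : 0 < trRe (mpow X (1 / p)) :=
    (Complex.pos_iff.1 (posDef_cfc hX fun x hx => Real.rpow_pos_of_pos hx (1 / p)).trace_pos).1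
  set τ := trRe (mpow X (1 / p)) with hτ_def
  have hcont : ∀ f : ℝ → ℝ, ContinuousOn f (spectrum ℝ X) := fun f =>
    X.finite_real_spectrum.continuousOn f
  have hsm : ∀ c : ℝ, trRe (cfc (fun x : ℝ => c * x ^ (1 / p)) X) = c * τ := by
    intro c
    rw [cfc_const_mul c (fun x : ℝ => x ^ (1 / p)) X (hcont _)]
    simp [trRe, hτ_def, mpow]
  refine ⟨cfc (fun x : ℝ => τ⁻¹ * x ^ (1 / p)) X, posDef_cfc hX fun x hx => by positivity, ?_, ?_⟩
  · rw [hsm, inv_mul_cancel₀ hτ.ne']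
  have hcomp : X * mpow (cfc (fun x : ℝ => τ⁻¹ * x ^ (1 / p)) X) (1 - p) =
      cfc (fun x : ℝ => τ ^ (p - 1) * x ^ (1 / p)) X := by
    rw [mpow, ← cfc_comp' (fun x : ℝ => x ^ (1 - p)) (fun x : ℝ => τ⁻¹ * x ^ (1 / p)) X
      ((X.finite_real_spectrum.image _).continuousOn _) (hcont _)]
    nth_rw 1 [← cfc_id ℝ X]
    rw [← cfc_mul _ _ X (hcont _) (hcont _)]
    refine cfc_congr fun x hx => ?_
    have hx := pos_of_mem_spectrum hX hx
    simp only [id]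
    rw [Real.mul_rpow (by positivity) (by positivity), Real.inv_rpow hτ.le, ← Real.rpow_neg hτ.le,
      neg_sub, ← Real.rpow_mul hx.le, mul_left_comm]
    congr 1
    nth_rw 1 [← Real.rpow_one x]
    rw [← Real.rpow_add hx]
    congr 1
    field_simp
    ring
  rw [hcomp, hsm, Real.rpow_sub_one hτ.ne', div_mul_cancel₀ _ hτ.ne']

end ReverseHolder

/-- Convexity of h_q(A) = log_q(φ_q(A)) for q ∈ [2,3] and positive definite L. -/
theorem stmt9 {n : ℕ} (q : ℝ) (hq : q ∈ Set.Icc (2 : ℝ) 3)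
    (H L : Matrix (Fin n) (Fin n) ℂ) (hH : (1 - Hᴴ * H).PosSemidef) (hL : L.PosDef)
    (A₁ A₂ : Matrix (Fin n) (Fin n) ℂ) (hA₁ : A₁.PosDef) (hA₂ : A₂.PosDef)
    (t : ℝ) (ht : t ∈ Set.Icc (0 : ℝ) 1) :
    logq q (phiq q H L (t • A₁ + (1 - t) • A₂))
      ≤ t * logq q (phiq q H L A₁) + (1 - t) * logq q (phiq q H L A₂) := by
  rcases Nat.eq_zero_or_pos n with rfl | hn
  · rw [Subsingleton.elim (t • A₁ + (1 - t) • A₂) A₁, Subsingleton.elim A₂ A₁]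
    exact le_of_eq (by ring)
  have : NeZero n := ⟨hn.ne'⟩
  have hp : q - 1 ∈ Set.Icc (1 : ℝ) 2 := ⟨by linarith [hq.1], by linarith [hq.2]⟩
  have hp₀ : 0 < q - 1 := by linarith [hp.1]
  have hC : (1 - Hᴴ * H + (q - 1) • L).PosDef := PosDef.posSemidef_add hH (hL.smul hp₀)
  have hA := posDef_convexComb hA₁ hA₂ ht
  have hpos : ∀ {A : Matrix (Fin n) (Fin n) ℂ}, A.PosDef →
      (1 - Hᴴ * H + (q - 1) • L + Hᴴ * mpow A (q - 1) * H).PosDef := fun hA =>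
    hC.add_posSemidef ((posDef_cfc hA fun x hx =>
      Real.rpow_pos_of_pos hx (q - 1)).posSemidef.conjTranspose_mul_mul_same H)
  obtain ⟨Z₁, hZ₁, hZ₁tr, h₁⟩ := exists_trRe_mul_mpow_eq (hpos hA₁) hp.1
  obtain ⟨Z₂, hZ₂, hZ₂tr, h₂⟩ := exists_trRe_mul_mpow_eq (hpos hA₂) hp.1
  have hZtr : trRe (t • Z₁ + (1 - t) • Z₂) = 1 := by
    simp only [trRe] at hZ₁tr hZ₂tr
    simp [trRe, trace_add, trace_smul, hZ₁tr, hZ₂tr]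
  have h := rpow_trRe_mpow_le (hpos hA) (posDef_convexComb hZ₁ hZ₂ ht) hZtr hp.1
  have hadd : ∀ M N R : Matrix (Fin n) (Fin n) ℂ,
      trRe ((M + N) * R) = trRe (M * R) + trRe (N * R) := fun M N R => by
    simp [trRe, add_mul, trace_add]
  have hcC := trRe_mul_mpow_convexComb hp hC.posSemidef hZ₁ hZ₂ ht
  have hcH := trRe_mul_mpow_mul_mpow_convexComb hp H hA₁ hA₂ hZ₁ hZ₂ ht
  rw [hadd] at h h₁ h₂
  have key : phiq q H L (t • A₁ + (1 - t) • A₂) ^ (q - 1) ≤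
      t * phiq q H L A₁ ^ (q - 1) + (1 - t) * phiq q H L A₂ ^ (q - 1) := by
    simp only [phiq]
    rw [← h₁, ← h₂]
    linarith
  calc logq q (phiq q H L (t • A₁ + (1 - t) • A₂))
      ≤ (t * phiq q H L A₁ ^ (q - 1) + (1 - t) * phiq q H L A₂ ^ (q - 1) - 1) / (q - 1) := by
        unfold logq
        gcongr
    _ = t * logq q (phiq q H L A₁) + (1 - t) * logq q (phiq q H L A₂) := by
        unfold logq
        ring
end

section
/- Let q ∈ (1,2], let H₁,…,H_k be m×n complex matrices with H₁*H₁ + ⋯ + H_k*H_k ≤ I_n, and let L be an n×n positive semidefinite matrix. Then the function φ(A₁,…,A_k) = Tr exp_q(L + H₁* log_q(A₁) H₁ + ⋯ + H_k* log_q(A_k) H_k) is jointly concave in tuples (A₁,…,A_k) of m×m positive definite matrices. -/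
open Matrix ComplexOrder

/-- The multivariate trace functional φ(A₁,…,A_k) = Tr exp_q(L + Σⱼ Hⱼ* log_q(Aⱼ) Hⱼ). -/
noncomputable def phim {m n k : ℕ} (q : ℝ) (H : Fin k → Matrix (Fin m) (Fin n) ℂ)
    (L : Matrix (Fin n) (Fin n) ℂ) (A : Fin k → Matrix (Fin m) (Fin m) ℂ) : ℝ :=
  trRe (mexpq q (L + ∑ j, (H j)ᴴ * mlogq q (A j) * H j))

section TraceConcavity

variable {m n : Type*} [Fintype m] [DecidableEq m] [Fintype n] [DecidableEq n]

/-- The quadratic form `⟨K, F(L_A, R_B) K⟩`, where `L_A` and `R_B` are the commuting operators of left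
multiplication by `A` and right multiplication by `B`. -/
noncomputable def spectralForm {A : Matrix m m ℂ} {B : Matrix n n ℂ} (hA : A.IsHermitian)
    (hB : B.IsHermitian) (K : Matrix m n ℂ) (F : ℝ → ℝ → ℝ) : ℝ :=
  ∑ i, ∑ j, F (hA.eigenvalues i) (hB.eigenvalues j) *
    Complex.normSq (((hA.eigenvectorUnitary : Matrix m m ℂ)ᴴ * K *
      (hB.eigenvectorUnitary : Matrix n n ℂ)) i j)

theorem cfc_eq_mul_diagonal_mul {A : Matrix m m ℂ} (hA : A.IsHermitian) (f : ℝ → ℝ) :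
    cfc f A = (hA.eigenvectorUnitary : Matrix m m ℂ) *
      diagonal (fun i => (f (hA.eigenvalues i) : ℂ)) *
        (hA.eigenvectorUnitary : Matrix m m ℂ)ᴴ := by
  rw [hA.cfc_eq, Matrix.IsHermitian.cfc, Unitary.conjStarAlgAut_apply]
  rfl

theorem re_trace_conjTranspose_mul_diagonal (a : m → ℝ) (b : n → ℝ) (M : Matrix m n ℂ) :
    (trace (Mᴴ * diagonal (fun i => (a i : ℂ)) * M * diagonal (fun j => (b j : ℂ)))).re =
      ∑ i, ∑ j, a i * b j * Complex.normSq (M i j) := by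
  rw [Finset.sum_comm]
  simp only [trace, diag_apply, mul_diagonal, Complex.re_sum]
  refine Finset.sum_congr rfl fun j _ => ?_
  rw [mul_apply, Finset.sum_mul, Complex.re_sum]
  refine Finset.sum_congr rfl fun i _ => ?_
  rw [mul_diagonal, conjTranspose_apply]
  simp [Complex.normSq_apply]
  ring

theorem re_trace_mul_cfc {A : Matrix m m ℂ} {B : Matrix n n ℂ} (hA : A.IsHermitian)
    (hB : B.IsHermitian) (K : Matrix m n ℂ) (f g : ℝ → ℝ) :
    (trace (Kᴴ * cfc f A * K * cfc g B)).re = spectralForm hA hB K (fun a b => f a * g b) := by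
  rw [spectralForm, ← re_trace_conjTranspose_mul_diagonal, cfc_eq_mul_diagonal_mul hA,
    cfc_eq_mul_diagonal_mul hB, ← Matrix.mul_assoc, trace_mul_comm, conjTranspose_mul,
    conjTranspose_mul, conjTranspose_conjTranspose]
  simp only [Matrix.mul_assoc]

theorem re_trace_mul_left {A : Matrix m m ℂ} {B : Matrix n n ℂ} (hA : A.IsHermitian)
    (hB : B.IsHermitian) (K : Matrix m n ℂ) :
    (trace (Kᴴ * A * K)).re = spectralForm hA hB K (fun a _ => a) := by
  have h := re_trace_mul_cfc hA hB K id (fun _ => 1)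
  rw [cfc_id ℝ A hA.isSelfAdjoint, cfc_const_one ℝ B hB.isSelfAdjoint] at h
  simpa using h

theorem re_trace_mul_right {A : Matrix m m ℂ} {B : Matrix n n ℂ} (hA : A.IsHermitian)
    (hB : B.IsHermitian) (K : Matrix m n ℂ) :
    (trace (Kᴴ * K * B)).re = spectralForm hA hB K (fun _ b => b) := by
  have h := re_trace_mul_cfc hA hB K (fun _ => 1) id
  rw [cfc_id ℝ B hB.isSelfAdjoint, cfc_const_one ℝ A hA.isSelfAdjoint] at h
  simpa using h

/-- The weight of the parallel sum `a : s b`. -/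
noncomputable def parallelWeight (s a b : ℝ) : ℝ := a * (s * b) / (a + s * b)

theorem parallelWeight_mul_normSq_add_le {s a b : ℝ} (hs : 0 < s) (ha : 0 ≤ a) (hb : 0 ≤ b)
    (x y : ℂ) :
    parallelWeight s a b * Complex.normSq (x + y) ≤
      a * Complex.normSq x + s * (b * Complex.normSq y) := by
  have hc : 0 ≤ s * b := by positivity
  rw [parallelWeight, ← mul_assoc s b]
  generalize s * b = c at hc
  rcases (add_nonneg ha hc).eq_or_lt with h | h
  · rw [← h]; simp only [div_zero, zero_mul]
    have := Complex.normSq_nonneg x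
    have := Complex.normSq_nonneg y
    positivity
  · rw [div_mul_eq_mul_div, div_le_iff₀ h]
    simp only [Complex.normSq_apply, Complex.add_re, Complex.add_im]
    nlinarith [sq_nonneg (a * x.re - c * y.re), sq_nonneg (a * x.im - c * y.im)]

theorem parallelWeight_mul_normSq {s a b : ℝ} (hs : 0 < s) (ha : 0 ≤ a) (hb : 0 ≤ b) (z : ℂ) :
    a * Complex.normSq ((s * b / (a + s * b) : ℝ) * z) +
      s * (b * Complex.normSq (z - (s * b / (a + s * b) : ℝ) * z)) =
      parallelWeight s a b * Complex.normSq z := by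
  have hc : 0 ≤ s * b := by positivity
  rw [parallelWeight, ← mul_assoc s b]
  generalize s * b = c at hc
  rcases (add_nonneg ha hc).eq_or_lt with h | h
  · have h1 : a = 0 := by linarith
    have h2 : c = 0 := by linarith
    simp [h1, h2]
  · have h0 := h.ne'
    have : z - ((c / (a + c) : ℝ) : ℂ) * z = ((a / (a + c) : ℝ) : ℂ) * z := by
      have : (a / (a + c) : ℝ) = 1 - c / (a + c) := by field_simp; ring
      rw [this]; push_cast; ring
    rw [this, Complex.normSq_mul, Complex.normSq_mul, Complex.normSq_ofReal, Complex.normSq_ofReal]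
    field_simp
    ring

theorem spectralForm_parallelWeight_le {A : Matrix m m ℂ} {B : Matrix n n ℂ} (hA : A.PosSemidef)
    (hB : B.PosSemidef) {s : ℝ} (hs : 0 < s) (X Y : Matrix m n ℂ) :
    spectralForm hA.1 hB.1 (X + Y) (parallelWeight s) ≤
      (trace (Xᴴ * A * X)).re + s * (trace (Yᴴ * Y * B)).re := by
  rw [re_trace_mul_left hA.1 hB.1, re_trace_mul_right hA.1 hB.1]
  simp only [spectralForm, Finset.mul_sum, ← Finset.sum_add_distrib, Matrix.mul_add,
    Matrix.add_mul, Matrix.add_apply]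
  exact Finset.sum_le_sum fun i _ => Finset.sum_le_sum fun j _ =>
    parallelWeight_mul_normSq_add_le hs (hA.eigenvalues_nonneg i) (hB.eigenvalues_nonneg j) _ _

theorem exists_spectralForm_parallelWeight_eq {A : Matrix m m ℂ} {B : Matrix n n ℂ}
    (hA : A.PosSemidef) (hB : B.PosSemidef) {s : ℝ} (hs : 0 < s) (K : Matrix m n ℂ) :
    ∃ X Y : Matrix m n ℂ, X + Y = K ∧
      (trace (Xᴴ * A * X)).re + s * (trace (Yᴴ * Y * B)).re =
        spectralForm hA.1 hB.1 K (parallelWeight s) := by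
  set U : Matrix m m ℂ := (hA.1.eigenvectorUnitary : Matrix m m ℂ) with hU
  set V : Matrix n n ℂ := (hB.1.eigenvectorUnitary : Matrix n n ℂ) with hV
  have hUU : Uᴴ * U = 1 := Unitary.coe_star_mul_self hA.1.eigenvectorUnitary
  have hVV : Vᴴ * V = 1 := Unitary.coe_star_mul_self hB.1.eigenvectorUnitary
  set R : Matrix m n ℂ := Matrix.of fun i j =>
    ((s * hB.1.eigenvalues j / (hA.1.eigenvalues i + s * hB.1.eigenvalues j) : ℝ) : ℂ) *
      (Uᴴ * K * V) i j with hR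
  have hX : Uᴴ * (U * R * Vᴴ) * V = R := by
    simp only [Matrix.mul_assoc, hVV, Matrix.mul_one]
    rw [← Matrix.mul_assoc, hUU, Matrix.one_mul]
  refine ⟨U * R * Vᴴ, K - U * R * Vᴴ, by simp, ?_⟩
  rw [re_trace_mul_left hA.1 hB.1, re_trace_mul_right hA.1 hB.1]
  simp only [spectralForm, Finset.mul_sum, ← Finset.sum_add_distrib, Matrix.mul_sub,
    Matrix.sub_mul, Matrix.sub_apply, ← hU, ← hV, hX]
  refine Finset.sum_congr rfl fun i _ => Finset.sum_congr rfl fun j _ => ?_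
  rw [hR]
  exact parallelWeight_mul_normSq hs (hA.eigenvalues_nonneg i) (hB.eigenvalues_nonneg j) _

theorem spectralForm_parallelWeight_concave {A₁ A₂ A : Matrix m m ℂ} {B₁ B₂ B : Matrix n n ℂ}
    (hA₁ : A₁.PosSemidef) (hA₂ : A₂.PosSemidef) (hA : A.PosSemidef)
    (hB₁ : B₁.PosSemidef) (hB₂ : B₂.PosSemidef) (hB : B.PosSemidef)
    {u v : ℝ} (hu : 0 ≤ u) (hv : 0 ≤ v) (hAe : A = u • A₁ + v • A₂) (hBe : B = u • B₁ + v • B₂)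
    {s : ℝ} (hs : 0 < s) (K : Matrix m n ℂ) :
    u * spectralForm hA₁.1 hB₁.1 K (parallelWeight s) +
      v * spectralForm hA₂.1 hB₂.1 K (parallelWeight s) ≤
      spectralForm hA.1 hB.1 K (parallelWeight s) := by
  obtain ⟨X, Y, rfl, h⟩ := exists_spectralForm_parallelWeight_eq hA hB hs K
  rw [← h]
  have h₁ := mul_le_mul_of_nonneg_left (spectralForm_parallelWeight_le hA₁ hB₁ hs X Y) hu
  have h₂ := mul_le_mul_of_nonneg_left (spectralForm_parallelWeight_le hA₂ hB₂ hs X Y) hv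
  have e : (trace (Xᴴ * A * X)).re + s * (trace (Yᴴ * Y * B)).re =
      u * ((trace (Xᴴ * A₁ * X)).re + s * (trace (Yᴴ * Y * B₁)).re) +
      v * ((trace (Xᴴ * A₂ * X)).re + s * (trace (Yᴴ * Y * B₂)).re) := by
    simp only [hAe, hBe, Matrix.mul_add, Matrix.add_mul, Matrix.mul_smul, Matrix.smul_mul,
      trace_add, trace_smul, Complex.add_re, Complex.smul_re, smul_eq_mul]
    ring
  linarith

open Real MeasureTheory in
theorem mul_rpowIntegrand_div {p s a b : ℝ} (hs : 0 < s) (ha : 0 ≤ a) (hb : 0 ≤ b) :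
    b * rpowIntegrand₀₁ p s (a / b) = s ^ p / s ^ 2 * parallelWeight s a b := by
  rcases hb.eq_or_lt with rfl | hb
  · simp [parallelWeight]
  · have : 0 < s + a / b := by positivity
    have : 0 < a + s * b := by positivity
    rw [rpowIntegrand₀₁, parallelWeight]
    field_simp
    ring

theorem mul_div_rpow {p a b : ℝ} (hp : p < 1) (ha : 0 ≤ a) (hb : 0 ≤ b) :
    b * (a / b) ^ p = a ^ p * b ^ (1 - p) := by
  rcases hb.eq_or_lt with rfl | hb
  · simp [Real.zero_rpow (sub_pos.2 hp).ne']
  · rw [Real.div_rpow ha hb.le, Real.rpow_sub hb, Real.rpow_one]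
    ring

open Real MeasureTheory in
theorem integrableOn_spectralForm {A : Matrix m m ℂ} {B : Matrix n n ℂ} (hA : A.PosSemidef)
    (hB : B.PosSemidef) {p : ℝ} (hp : p ∈ Set.Ioo 0 1) (K : Matrix m n ℂ) :
    IntegrableOn (fun s => spectralForm hA.1 hB.1 K (fun a b => b * rpowIntegrand₀₁ p s (a / b)))
      (Set.Ioi 0) :=
  integrable_finsetSum _ fun i _ => integrable_finsetSum _ fun j _ =>
    ((integrableOn_rpowIntegrand₀₁_Ioi hp
      (div_nonneg (hA.eigenvalues_nonneg i) (hB.eigenvalues_nonneg j))).const_mul _).mul_const _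

open Real MeasureTheory in
theorem integral_spectralForm {A : Matrix m m ℂ} {B : Matrix n n ℂ} (hA : A.PosSemidef)
    (hB : B.PosSemidef) {p : ℝ} (hp : p ∈ Set.Ioo 0 1) (K : Matrix m n ℂ) :
    ∫ s in Set.Ioi 0, spectralForm hA.1 hB.1 K (fun a b => b * rpowIntegrand₀₁ p s (a / b)) =
      spectralForm hA.1 hB.1 K (fun a b => a ^ p * b ^ (1 - p)) *
        ∫ s in Set.Ioi 0, rpowIntegrand₀₁ p s 1 := by
  have hint (i : m) (j : n) := integrableOn_rpowIntegrand₀₁_Ioi hp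
    (div_nonneg (hA.eigenvalues_nonneg i) (hB.eigenvalues_nonneg j))
  simp only [spectralForm]
  rw [integral_finsetSum _ fun i _ => integrable_finsetSum _ fun j _ =>
    ((hint i j).const_mul _).mul_const _, Finset.sum_mul]
  refine Finset.sum_congr rfl fun i _ => ?_
  rw [integral_finsetSum _ fun j _ => ((hint i j).const_mul _).mul_const _, Finset.sum_mul]
  refine Finset.sum_congr rfl fun j _ => ?_
  rw [integral_mul_const, integral_const_mul, integral_rpowIntegrand₀₁_eq_rpow_mul_const hp
    (div_nonneg (hA.eigenvalues_nonneg i) (hB.eigenvalues_nonneg j)), ← mul_assoc,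
    mul_div_rpow hp.2 (hA.eigenvalues_nonneg i) (hB.eigenvalues_nonneg j)]
  ring

open Real MeasureTheory in
/-- **Lieb's concavity theorem**: `(A, B) ↦ Tr K* A^p K B^(1-p)` is jointly concave. -/
theorem lieb_concavity_s10 {A₁ A₂ A : Matrix m m ℂ} {B₁ B₂ B : Matrix n n ℂ}
    (hA₁ : A₁.PosSemidef) (hA₂ : A₂.PosSemidef) (hA : A.PosSemidef)
    (hB₁ : B₁.PosSemidef) (hB₂ : B₂.PosSemidef) (hB : B.PosSemidef)
    {u v : ℝ} (hu : 0 ≤ u) (hv : 0 ≤ v) (hAe : A = u • A₁ + v • A₂) (hBe : B = u • B₁ + v • B₂)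
    {p : ℝ} (hp : p ∈ Set.Ioo 0 1) (K : Matrix m n ℂ) :
    u * (trace (Kᴴ * cfc (fun x : ℝ => x ^ p) A₁ * K * cfc (fun x : ℝ => x ^ (1 - p)) B₁)).re +
      v * (trace (Kᴴ * cfc (fun x : ℝ => x ^ p) A₂ * K * cfc (fun x : ℝ => x ^ (1 - p)) B₂)).re ≤
      (trace (Kᴴ * cfc (fun x : ℝ => x ^ p) A * K * cfc (fun x : ℝ => x ^ (1 - p)) B)).re := by
  rw [re_trace_mul_cfc hA₁.1 hB₁.1, re_trace_mul_cfc hA₂.1 hB₂.1, re_trace_mul_cfc hA.1 hB.1]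
  have hc : 0 < ∫ s in Set.Ioi 0, rpowIntegrand₀₁ p s 1 :=
    integral_rpowIntegrand₀₁_one_pos hp
  refine le_of_mul_le_mul_right ?_ hc
  rw [add_mul, mul_assoc, mul_assoc, ← integral_spectralForm hA₁ hB₁ hp,
    ← integral_spectralForm hA₂ hB₂ hp, ← integral_spectralForm hA hB hp,
    ← integral_const_mul, ← integral_const_mul,
    ← integral_add ((integrableOn_spectralForm hA₁ hB₁ hp K).const_mul u)
      ((integrableOn_spectralForm hA₂ hB₂ hp K).const_mul v)]
  refine setIntegral_mono_on (((integrableOn_spectralForm hA₁ hB₁ hp K).const_mul u).add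
      ((integrableOn_spectralForm hA₂ hB₂ hp K).const_mul v)) (integrableOn_spectralForm hA hB hp K)
      measurableSet_Ioi fun s (hs : 0 < s) => ?_
  have key {A : Matrix m m ℂ} {B : Matrix n n ℂ} (hA : A.PosSemidef) (hB : B.PosSemidef) :
      spectralForm hA.1 hB.1 K (fun a b => b * rpowIntegrand₀₁ p s (a / b)) =
        s ^ p / s ^ 2 * spectralForm hA.1 hB.1 K (parallelWeight s) := by
    simp only [spectralForm, Finset.mul_sum]
    refine Finset.sum_congr rfl fun i _ => Finset.sum_congr rfl fun j _ => ?_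
    rw [mul_rpowIntegrand_div hs (hA.eigenvalues_nonneg i) (hB.eigenvalues_nonneg j), mul_assoc]
  rw [key hA₁ hB₁, key hA₂ hB₂, key hA hB]
  have := mul_le_mul_of_nonneg_left (spectralForm_parallelWeight_concave hA₁ hA₂ hA hB₁ hB₂ hB
    hu hv hAe hBe hs K) (show 0 ≤ s ^ p / s ^ 2 by positivity)
  linarith

theorem posSemidef_cfc {A : Matrix m m ℂ} (hA : A.PosSemidef) {f : ℝ → ℝ}
    (hf : ∀ x, 0 ≤ x → 0 ≤ f x) : (cfc f A).PosSemidef := by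
  rw [cfc_eq_mul_diagonal_mul hA.1]
  refine PosSemidef.mul_mul_conjTranspose_same (posSemidef_diagonal_iff.2 fun i => ?_) _
  exact_mod_cast hf _ (hA.eigenvalues_nonneg i)

theorem cfc_comp_of_isHermitian {A : Matrix m m ℂ} (hA : A.IsHermitian) (g f : ℝ → ℝ) :
    cfc g (cfc f A) = cfc (fun x => g (f x)) A :=
  (cfc_comp' g f A ((A.finite_real_spectrum.image f).continuousOn g)
    (A.finite_real_spectrum.continuousOn f) hA.isSelfAdjoint).symm

/-- The tracial Young inequality `Tr X Z^(1-p) ≤ p Tr X^(1/p) + (1-p) Tr Z`. -/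
theorem re_trace_mul_cfc_rpow_le {X Z : Matrix n n ℂ} (hX : X.PosSemidef) (hZ : Z.PosSemidef)
    {p : ℝ} (hp : p ∈ Set.Ioo 0 1) :
    (trace (X * cfc (fun x : ℝ => x ^ (1 - p)) Z)).re ≤
      p * (trace (cfc (fun x : ℝ => x ^ (1 / p)) X)).re + (1 - p) * (trace Z).re := by
  have h₁ := re_trace_mul_cfc hX.1 hZ.1 1 id (fun x : ℝ => x ^ (1 - p))
  have h₂ := re_trace_mul_cfc hX.1 hZ.1 1 (fun x : ℝ => x ^ (1 / p)) (fun _ => 1)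
  have h₃ := re_trace_mul_right hX.1 hZ.1 1
  rw [cfc_id ℝ X hX.1.isSelfAdjoint] at h₁
  rw [cfc_const_one ℝ Z hZ.1.isSelfAdjoint] at h₂
  simp only [conjTranspose_one, Matrix.one_mul, Matrix.mul_one] at h₁ h₂ h₃
  rw [h₁, h₂, h₃]
  simp only [spectralForm, Finset.mul_sum, ← Finset.sum_add_distrib]
  refine Finset.sum_le_sum fun i _ => Finset.sum_le_sum fun j _ => ?_
  have hx := hX.eigenvalues_nonneg i
  have hz := hZ.eigenvalues_nonneg j
  have young := Real.geom_mean_le_arith_mean2_weighted hp.1.le (sub_nonneg.2 hp.2.le)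
    (Real.rpow_nonneg hx (1 / p)) hz (by ring)
  rw [← Real.rpow_mul hx, one_div_mul_cancel hp.1.ne', Real.rpow_one] at young
  have := mul_le_mul_of_nonneg_right young (Complex.normSq_nonneg
    (((hX.1.eigenvectorUnitary : Matrix n n ℂ)ᴴ * (1 : Matrix n n ℂ) *
      (hZ.1.eigenvectorUnitary : Matrix n n ℂ)) i j))
  simp only [id]
  linarith

theorem mul_cfc_cfc_rpow {X : Matrix n n ℂ} (hX : X.PosSemidef) {p : ℝ} (hp : p ∈ Set.Ioo 0 1) :
    X * cfc (fun x : ℝ => x ^ (1 - p)) (cfc (fun x : ℝ => x ^ (1 / p)) X) =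
      cfc (fun x : ℝ => x ^ (1 / p)) X := by
  rw [cfc_comp_of_isHermitian hX.1]
  nth_rw 1 [← cfc_id ℝ X hX.1.isSelfAdjoint]
  rw [← cfc_mul _ _ _ (X.finite_real_spectrum.continuousOn _)
    (X.finite_real_spectrum.continuousOn _)]
  refine cfc_congr fun x hx => ?_
  rw [hX.1.spectrum_real_eq_range_eigenvalues] at hx
  obtain ⟨i, rfl⟩ := hx
  have h0 := hX.eigenvalues_nonneg i
  generalize hX.1.eigenvalues i = x at h0
  simp only [id]
  rw [← Real.rpow_mul h0]
  rcases h0.eq_or_lt with rfl | h0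
  · simp [Real.zero_rpow (inv_ne_zero hp.1.ne')]
  · have hp0 := hp.1.ne'
    nth_rw 1 [← Real.rpow_one x]
    rw [← Real.rpow_add h0]
    congr 1
    field_simp
    ring

open scoped MatrixOrder in
theorem exists_eq_conjTranspose_mul_self {C : Matrix n n ℂ} (hC : C.PosSemidef) :
    ∃ K : Matrix n n ℂ, C = Kᴴ * K :=
  CStarAlgebra.nonneg_iff_eq_star_mul_self.mp hC.nonneg

variable {ι : Type*} [Fintype ι]

theorem posSemidef_add_sum_rpow {d : Type*} [Finite d] {C : Matrix d d ℂ} (hC : C.PosSemidef)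
    (H : ι → Matrix m d ℂ) {A : ι → Matrix m m ℂ} (hA : ∀ j, (A j).PosSemidef) (p : ℝ) :
    (C + ∑ j, (H j)ᴴ * cfc (fun x : ℝ => x ^ p) (A j) * H j).PosSemidef :=
  hC.add (posSemidef_sum _ fun j _ => PosSemidef.conjTranspose_mul_mul_same
    (posSemidef_cfc (hA j) fun _ hx => Real.rpow_nonneg hx p) _)

theorem re_trace_add_sum_mul {d : Type*} [Fintype d] (C Z : Matrix d d ℂ) (M : ι → Matrix d d ℂ) :
    (trace ((C + ∑ j, M j) * Z)).re = (trace (C * Z)).re + ∑ j, (trace (M j * Z)).re := by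
  rw [Matrix.add_mul, Finset.sum_mul, trace_add, trace_sum, Complex.add_re, Complex.re_sum]

/-- Joint concavity of `(A, Z) ↦ Tr (C + ∑ⱼ Hⱼ* Aⱼ^p Hⱼ) Z^(1-p)`. -/
theorem re_trace_add_sum_mul_concave {C : Matrix n n ℂ} (hC : C.PosSemidef)
    (H : ι → Matrix m n ℂ) {A₁ A₂ A : ι → Matrix m m ℂ} {Z₁ Z₂ Z : Matrix n n ℂ}
    (hA₁ : ∀ j, (A₁ j).PosSemidef) (hA₂ : ∀ j, (A₂ j).PosSemidef) (hA : ∀ j, (A j).PosSemidef)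
    (hZ₁ : Z₁.PosSemidef) (hZ₂ : Z₂.PosSemidef) (hZ : Z.PosSemidef)
    {u v : ℝ} (hu : 0 ≤ u) (hv : 0 ≤ v) (huv : u + v = 1)
    (hAe : ∀ j, A j = u • A₁ j + v • A₂ j) (hZe : Z = u • Z₁ + v • Z₂)
    {p : ℝ} (hp : p ∈ Set.Ioo 0 1) :
    u * (trace ((C + ∑ j, (H j)ᴴ * cfc (fun x : ℝ => x ^ p) (A₁ j) * H j) *
        cfc (fun x : ℝ => x ^ (1 - p)) Z₁)).re +
      v * (trace ((C + ∑ j, (H j)ᴴ * cfc (fun x : ℝ => x ^ p) (A₂ j) * H j) *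
        cfc (fun x : ℝ => x ^ (1 - p)) Z₂)).re ≤
      (trace ((C + ∑ j, (H j)ᴴ * cfc (fun x : ℝ => x ^ p) (A j) * H j) *
        cfc (fun x : ℝ => x ^ (1 - p)) Z)).re := by
  obtain ⟨K, rfl⟩ := exists_eq_conjTranspose_mul_self hC
  have hone : (1 : Matrix n n ℂ) = u • 1 + v • 1 := by rw [← add_smul, huv, one_smul]
  have hK := lieb_concavity_s10 PosSemidef.one PosSemidef.one PosSemidef.one hZ₁ hZ₂ hZ hu hv hone hZe
    hp K
  have hcfc : cfc (fun x : ℝ => x ^ p) (1 : Matrix n n ℂ) = 1 := by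
    rw [cfc_apply_one]; simp
  rw [hcfc, Matrix.mul_one] at hK
  have hH := Finset.sum_le_sum fun j (_ : j ∈ Finset.univ) =>
    lieb_concavity_s10 (hA₁ j) (hA₂ j) (hA j) hZ₁ hZ₂ hZ hu hv (hAe j) hZe hp (H j)
  rw [Finset.sum_add_distrib, ← Finset.mul_sum, ← Finset.mul_sum] at hH
  rw [re_trace_add_sum_mul, re_trace_add_sum_mul, re_trace_add_sum_mul]
  linarith

/-- Joint concavity of `A ↦ Tr (C + ∑ⱼ Hⱼ* Aⱼ^p Hⱼ)^(1/p)` for `0 < p ≤ 1`. -/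
theorem re_trace_rpow_add_sum_concave {C : Matrix n n ℂ} (hC : C.PosSemidef)
    (H : ι → Matrix m n ℂ) {A₁ A₂ A : ι → Matrix m m ℂ}
    (hA₁ : ∀ j, (A₁ j).PosSemidef) (hA₂ : ∀ j, (A₂ j).PosSemidef) (hA : ∀ j, (A j).PosSemidef)
    {u v : ℝ} (hu : 0 ≤ u) (hv : 0 ≤ v) (huv : u + v = 1)
    (hAe : ∀ j, A j = u • A₁ j + v • A₂ j) {p : ℝ} (hp : p ∈ Set.Ioc 0 1) :
    u * (trace (cfc (fun x : ℝ => x ^ (1 / p))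
        (C + ∑ j, (H j)ᴴ * cfc (fun x : ℝ => x ^ p) (A₁ j) * H j))).re +
      v * (trace (cfc (fun x : ℝ => x ^ (1 / p))
        (C + ∑ j, (H j)ᴴ * cfc (fun x : ℝ => x ^ p) (A₂ j) * H j))).re ≤
      (trace (cfc (fun x : ℝ => x ^ (1 / p))
        (C + ∑ j, (H j)ᴴ * cfc (fun x : ℝ => x ^ p) (A j) * H j))).re := by
  have hX₁ := posSemidef_add_sum_rpow hC H hA₁ p
  have hX₂ := posSemidef_add_sum_rpow hC H hA₂ p
  have hX := posSemidef_add_sum_rpow hC H hA p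
  rcases hp.2.eq_or_lt with rfl | hp1
  · simp only [div_one, Real.rpow_one] at hX₁ hX₂ hX ⊢
    rw [cfc_id' ℝ _ hX₁.1.isSelfAdjoint, cfc_id' ℝ _ hX₂.1.isSelfAdjoint,
      cfc_id' ℝ _ hX.1.isSelfAdjoint]
    simp only [cfc_id' ℝ _ (hA₁ _).1.isSelfAdjoint, cfc_id' ℝ _ (hA₂ _).1.isSelfAdjoint,
      cfc_id' ℝ _ (hA _).1.isSelfAdjoint]
    refine le_of_eq ?_
    simp only [hAe, Matrix.mul_add, Matrix.add_mul, Matrix.mul_smul, Matrix.smul_mul,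
      trace_add, trace_smul, trace_sum, Complex.add_re, Complex.re_sum, Complex.smul_re,
      smul_eq_mul, Finset.sum_add_distrib, ← Finset.mul_sum]
    linear_combination (trace C).re * huv
  · have hp' : p ∈ Set.Ioo 0 1 := ⟨hp.1, hp1⟩
    have hZ₁ := posSemidef_cfc hX₁ fun _ hx => Real.rpow_nonneg hx (1 / p)
    have hZ₂ := posSemidef_cfc hX₂ fun _ hx => Real.rpow_nonneg hx (1 / p)
    have hZ := (hZ₁.smul hu).add (hZ₂.smul hv)
    have hle := re_trace_mul_cfc_rpow_le hX hZ hp'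
    have hconc := re_trace_add_sum_mul_concave hC H hA₁ hA₂ hA hZ₁ hZ₂ hZ hu hv huv hAe rfl hp'
    rw [mul_cfc_cfc_rpow hX₁ hp', mul_cfc_cfc_rpow hX₂ hp'] at hconc
    simp only [trace_add, trace_smul, Complex.add_re, Complex.smul_re, smul_eq_mul] at hle
    refine le_of_mul_le_mul_left ?_ hp.1
    linarith

end TraceConcavity

theorem phim_eq_trace_rpow {m n k : ℕ} {q : ℝ} (hq : 1 < q)
    (H : Fin k → Matrix (Fin m) (Fin n) ℂ) {L : Matrix (Fin n) (Fin n) ℂ} (hL : L.PosSemidef)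
    {A : Fin k → Matrix (Fin m) (Fin m) ℂ} (hA : ∀ j, (A j).PosDef) :
    phim q H L A = (trace (cfc (fun x : ℝ => x ^ (1 / (q - 1)))
      ((1 - ∑ j, (H j)ᴴ * H j + (q - 1) • L) +
        ∑ j, (H j)ᴴ * cfc (fun x : ℝ => x ^ (q - 1)) (A j) * H j))).re := by
  have hp : q - 1 ≠ 0 := (sub_pos.2 hq).ne'
  have hlog (j : Fin k) :
      (q - 1) • mlogq q (A j) = cfc (fun x : ℝ => x ^ (q - 1)) (A j) - 1 := by
    have hc (f : ℝ → ℝ) := (A j).finite_real_spectrum.continuousOn f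
    rw [mlogq, ← cfc_smul _ _ _ (hc _), ← cfc_const_one ℝ (A j) (hA j).1.isSelfAdjoint,
      ← cfc_sub _ _ _ (hc _) (hc _)]
    refine cfc_congr fun x _ => ?_
    simp only [logq, smul_eq_mul]
    field_simp
  set M := L + ∑ j, (H j)ᴴ * mlogq q (A j) * H j with hM
  have hMh : M.IsHermitian := by
    refine hL.1.add (isSelfAdjoint_sum _ fun j _ => ?_)
    have hj : (mlogq q (A j)).IsHermitian := cfc_predicate (R := ℝ) (logq q) (A j)
    exact isHermitian_conjTranspose_mul_mul _ hj
  have harg : (1 - ∑ j, (H j)ᴴ * H j + (q - 1) • L) +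
      ∑ j, (H j)ᴴ * cfc (fun x : ℝ => x ^ (q - 1)) (A j) * H j =
      cfc (fun x : ℝ => 1 + (q - 1) * x) M := by
    have hc (f : ℝ → ℝ) := M.finite_real_spectrum.continuousOn f
    have hterm (j : Fin k) : (H j)ᴴ * cfc (fun x : ℝ => x ^ (q - 1)) (A j) * H j =
        (q - 1) • ((H j)ᴴ * mlogq q (A j) * H j) + (H j)ᴴ * H j := by
      rw [← Matrix.smul_mul, ← Matrix.mul_smul, hlog j, Matrix.mul_sub, Matrix.sub_mul,
        Matrix.mul_one, sub_add_cancel]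
    rw [cfc_add (a := M) (fun _ => (1 : ℝ)) (fun x => (q - 1) * x) (hc _) (hc _),
      cfc_const_one ℝ M hMh.isSelfAdjoint, cfc_const_mul_id (q - 1) M hMh.isSelfAdjoint, hM,
      smul_add, Finset.smul_sum, Finset.sum_congr rfl fun j _ => hterm j, Finset.sum_add_distrib]
    abel
  rw [harg, cfc_comp_of_isHermitian hMh, phim, trRe, mexpq]
  refine congrArg (fun f => (trace (cfc f M)).re) (funext fun x => ?_)
  rw [expq, if_neg hq.ne']

/-- Joint concavity of φ for q ∈ (1,2], Σⱼ Hⱼ*Hⱼ ≤ I and L positive semidefinite. -/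
theorem stmt10 {m n k : ℕ} (q : ℝ) (hq : q ∈ Set.Ioc (1 : ℝ) 2)
    (H : Fin k → Matrix (Fin m) (Fin n) ℂ)
    (hH : (1 - ∑ j, (H j)ᴴ * H j).PosSemidef)
    (L : Matrix (Fin n) (Fin n) ℂ) (hL : L.PosSemidef)
    (A B : Fin k → Matrix (Fin m) (Fin m) ℂ)
    (hA : ∀ j, (A j).PosDef) (hB : ∀ j, (B j).PosDef)
    (t : ℝ) (ht : t ∈ Set.Icc (0 : ℝ) 1) :
    phim q H L (fun j => t • A j + (1 - t) • B j)
      ≥ t * phim q H L A + (1 - t) * phim q H L B := by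
  have hp : q - 1 ∈ Set.Ioc (0 : ℝ) 1 := ⟨sub_pos.2 hq.1, by linarith [hq.2]⟩
  have hAB (j : Fin k) : (t • A j + (1 - t) • B j).PosDef := by
    rcases ht.1.eq_or_lt with rfl | h
    · simpa using hB j
    · exact ((hA j).smul h).add_posSemidef ((hB j).posSemidef.smul (sub_nonneg.2 ht.2))
  simp only [phim_eq_trace_rpow hq.1 H hL hA, phim_eq_trace_rpow hq.1 H hL hB,
    phim_eq_trace_rpow hq.1 H hL hAB]
  exact re_trace_rpow_add_sum_concave (hH.add (hL.smul hp.1.le)) H (fun j => (hA j).posSemidef)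
    (fun j => (hB j).posSemidef) (fun j => (hAB j).posSemidef) ht.1 (sub_nonneg.2 ht.2) (by ring)
    (fun _ => rfl) hp
end

section
/- Let 1 ≤ q ≤ 2, let H₁,…,H_k be m×n complex matrices with H₁*H₁ + ⋯ + H_k*H_k = I_n, and let B₁,…,B_k be m×m positive definite matrices. Then Tr[exp_q(Σ_{j=1}^k H_j* B_j H_j)] ≤ Tr[Σ_{j=1}^k H_j* exp_q(B_j) H_j]. -/
open Matrix ComplexOrder

namespace Matrix.IsHermitian

variable {m n ι : Type*} [Fintype m] [DecidableEq m]

theorem conjTranspose_mul_cfc_mul_apply_self {B : Matrix m m ℂ} (hB : B.IsHermitian)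
    (X : Matrix m n ℂ) (f : ℝ → ℝ) (i : n) :
    (Xᴴ * cfc f B * X) i i =
      ((∑ l, ‖((hB.eigenvectorUnitary : Matrix m m ℂ)ᴴ * X) l i‖ ^ 2 * f (hB.eigenvalues l) : ℝ) :
        ℂ) := by
  rw [hB.cfc_eq, IsHermitian.cfc, Unitary.conjStarAlgAut_apply, star_eq_conjTranspose]
  set V : Matrix m m ℂ := (hB.eigenvectorUnitary : Matrix m m ℂ)
  set D : Matrix m m ℂ := diagonal (RCLike.ofReal ∘ f ∘ hB.eigenvalues) with hD
  have h : Xᴴ * (V * D * Vᴴ) * X = (Vᴴ * X)ᴴ * (D * (Vᴴ * X)) := by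
    simp only [conjTranspose_mul, conjTranspose_conjTranspose, Matrix.mul_assoc]
  rw [h, mul_apply]
  push_cast
  refine Finset.sum_congr rfl fun l _ => ?_
  rw [hD, diagonal_mul, conjTranspose_apply, ← Complex.conj_mul']
  simp only [Function.comp_apply, Complex.coe_algebraMap, RCLike.star_def]
  ring_nf

variable [Fintype n] [DecidableEq n] [Fintype ι]

theorem conjTranspose_eigenvectorUnitary_mul_cfc_mul {A : Matrix n n ℂ} (hA : A.IsHermitian)
    (f : ℝ → ℝ) :
    (hA.eigenvectorUnitary : Matrix n n ℂ)ᴴ * cfc f A * (hA.eigenvectorUnitary : Matrix n n ℂ) =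
      diagonal (fun i => (f (hA.eigenvalues i) : ℂ)) := by
  have hU : (hA.eigenvectorUnitary : Matrix n n ℂ)ᴴ * (hA.eigenvectorUnitary : Matrix n n ℂ) = 1 :=
    Unitary.coe_star_mul_self _
  rw [hA.cfc_eq, IsHermitian.cfc, Unitary.conjStarAlgAut_apply, star_eq_conjTranspose]
  simp only [Matrix.mul_assoc, hU, Matrix.mul_one]
  rw [← Matrix.mul_assoc, hU, Matrix.one_mul]
  rfl

/-- Jensen's trace inequality for a convex function and a unital column of matrices. -/
theorem re_trace_cfc_sum_le {s : Set ℝ} {f : ℝ → ℝ} (hf : ConvexOn ℝ s f)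
    {H : ι → Matrix m n ℂ} (hH : ∑ j, (H j)ᴴ * H j = 1)
    {B : ι → Matrix m m ℂ} (hB : ∀ j, (B j).IsHermitian)
    (hs : ∀ j l, (hB j).eigenvalues l ∈ s) :
    (trace (cfc f (∑ j, (H j)ᴴ * B j * H j))).re ≤
      (trace (∑ j, (H j)ᴴ * cfc f (B j) * H j)).re := by
  have hA : (∑ j, (H j)ᴴ * B j * H j).IsHermitian :=
    isSelfAdjoint_sum _ fun j _ => isHermitian_conjTranspose_mul_mul _ (hB j)
  set A := ∑ j, (H j)ᴴ * B j * H j with hAdef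
  set U : Matrix n n ℂ := (hA.eigenvectorUnitary : Matrix n n ℂ) with hUdef
  have hUU : U * Uᴴ = 1 := Unitary.coe_mul_star_self hA.eigenvectorUnitary
  have hUU' : Uᴴ * U = 1 := Unitary.coe_star_mul_self hA.eigenvectorUnitary
  have htr (X : Matrix n n ℂ) : trace X = trace (Uᴴ * X * U) := by
    rw [trace_mul_comm, ← Matrix.mul_assoc, hUU, Matrix.one_mul]
  let w (i : n) (p : ι × m) : ℝ :=
    ‖(((hB p.1).eigenvectorUnitary : Matrix m m ℂ)ᴴ * (H p.1 * U)) p.2 i‖ ^ 2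
  have key (g : ℝ → ℝ) (i : n) : (Uᴴ * (∑ j, (H j)ᴴ * cfc g (B j) * H j) * U) i i =
      ((∑ p, w i p * g ((hB p.1).eigenvalues p.2) : ℝ) : ℂ) := by
    rw [Fintype.sum_prod_type, Complex.ofReal_sum, Matrix.mul_sum, Matrix.sum_mul, sum_apply]
    refine Finset.sum_congr rfl fun j _ => ?_
    rw [← (hB j).conjTranspose_mul_cfc_mul_apply_self (H j * U) g i]
    simp only [conjTranspose_mul, Matrix.mul_assoc]
  have hw (i : n) : ∑ p, w i p = 1 := by
    have h := key (fun _ => 1) i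
    have h1 (j : ι) : cfc (fun _ : ℝ => (1 : ℝ)) (B j) = 1 := cfc_const_one ℝ (B j) (hB j)
    simp only [h1, Matrix.mul_one, hH, hUU', one_apply_eq, mul_one] at h
    exact_mod_cast h.symm
  have hl (i : n) : ∑ p, w i p * (hB p.1).eigenvalues p.2 = hA.eigenvalues i := by
    have h := key (fun x => x) i
    have h1 (j : ι) : cfc (fun x : ℝ => x) (B j) = B j := cfc_id' ℝ (B j) (hB j)
    have h2 := hA.conjTranspose_eigenvectorUnitary_mul_cfc_mul (fun x => x)
    have h3 : cfc (fun x : ℝ => x) A = A := cfc_id' ℝ A hA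
    rw [h3, ← hUdef] at h2
    simp only [h1] at h
    rw [← hAdef, h2, diagonal_apply_eq] at h
    exact_mod_cast h.symm
  rw [htr, htr (∑ j, _), hUdef, hA.conjTranspose_eigenvectorUnitary_mul_cfc_mul f, ← hUdef,
    trace_diagonal, trace]
  simp only [diag_apply, key]
  rw [← Complex.ofReal_sum, ← Complex.ofReal_sum, Complex.ofReal_re, Complex.ofReal_re]
  refine Finset.sum_le_sum fun i _ => ?_
  rw [← hl i]
  exact hf.map_sum_le (fun p _ => sq_nonneg _) (hw i) (fun p _ => hs p.1 p.2)

end Matrix.IsHermitian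

theorem convexOn_expq {q : ℝ} (hq : q ∈ Set.Icc (1 : ℝ) 2) :
    ConvexOn ℝ (Set.Ici 0) (expq q) := by
  obtain rfl | hq1 := hq.1.eq_or_lt
  · have h : expq 1 = Real.exp := by ext x; simp [expq]
    rw [h]
    exact convexOn_exp.subset (Set.subset_univ _) (convex_Ici 0)
  · have hpos : 0 < q - 1 := sub_pos.mpr hq1
    have hp : 1 ≤ 1 / (q - 1) := by
      rw [le_div_iff₀ hpos]
      linarith [hq.2]
    have h := (convexOn_rpow hp).comp_affineMap (AffineMap.lineMap (1 : ℝ) q)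
    have hfun : expq q = (fun x : ℝ => x ^ (1 / (q - 1))) ∘ AffineMap.lineMap (1 : ℝ) q := by
      ext x
      simp only [expq, hq1.ne', if_false, Function.comp_apply, AffineMap.lineMap_apply_ring']
      ring_nf
    rw [hfun]
    refine h.subset (fun x hx => ?_) (convex_Ici 0)
    simp only [Set.mem_preimage, Set.mem_Ici, AffineMap.lineMap_apply_ring'] at hx ⊢
    positivity

/-- Jensen type trace inequality for the deformed exponential, 1 ≤ q ≤ 2. -/
theorem stmt12 {m n k : ℕ} (q : ℝ) (hq : q ∈ Set.Icc (1 : ℝ) 2)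
    (H : Fin k → Matrix (Fin m) (Fin n) ℂ)
    (hH : ∑ j, (H j)ᴴ * H j = 1)
    (B : Fin k → Matrix (Fin m) (Fin m) ℂ) (hB : ∀ j, (B j).PosDef) :
    trRe (mexpq q (∑ j, (H j)ᴴ * B j * H j)) ≤ trRe (∑ j, (H j)ᴴ * mexpq q (B j) * H j) := by
  exact Matrix.IsHermitian.re_trace_cfc_sum_le (convexOn_expq hq) hH (fun j => (hB j).isHermitian)
    fun j l => ((hB j).eigenvalues_pos l).le
end

section
/- Let X, Y, Z be n×n Hermitian complex matrices with X Z = Z X, and let f be a continuously differentiable real function defined on an open interval containing all eigenvalues of X. Then the function t ↦ Tr[f(X + tY) Z] is differentiable at t = 0 with derivative Tr[Y f'(X) Z], where f(X+tY) and f'(X) are defined via the functional calculus for Hermitian matrices. -/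
open Matrix ComplexOrder

open Polynomial in
/-- Hermite interpolation to first order: values and derivatives can be prescribed at finitely
many points. -/
theorem exists_polynomial_eval_eq_and_eval_derivative_eq {K : Type*} [Field K] (s : Finset K)
    (u v : K → K) :
    ∃ p : K[X], ∀ x ∈ s, p.eval x = u x ∧ (derivative p).eval x = v x := by
  classical
  have hinj : Set.InjOn (id : K → K) s := Function.injective_id.injOn
  set q := Lagrange.nodal s (id : K → K)
  set p := Lagrange.interpolate s id u
  set r := Lagrange.interpolate s id
    fun x => (v x - (derivative p).eval x) / (derivative q).eval x
  refine ⟨p + q * r, fun x hx => ?_⟩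
  have hp : p.eval x = u x := Lagrange.eval_interpolate_at_node u hinj hx
  have hr : r.eval x = (v x - (derivative p).eval x) / (derivative q).eval x :=
    Lagrange.eval_interpolate_at_node _ hinj hx
  have hq : q.eval x = 0 := Lagrange.eval_nodal_at_node (v := (id : K → K)) hx
  have hq' : (derivative q).eval x ≠ 0 := by
    have h := Lagrange.nodalWeight_ne_zero hinj hx
    rw [Lagrange.nodalWeight_eq_eval_derivative_nodal hx] at h
    exact fun h0 => h (inv_eq_zero.mpr h0)
  constructor
  · simp [hp, hq]
  · simp [derivative_mul, hq, hr, mul_div_cancel₀ _ hq']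

section SpectralPerturbation

variable {A : Type*} [NormedRing A] [StarRing A] [NormedAlgebra ℝ A] [CompleteSpace A]
  [IsometricContinuousFunctionalCalculus ℝ A IsSelfAdjoint]

/-- The spectrum of a perturbation of a self-adjoint element lies within the norm of the
perturbation of the original spectrum. -/
theorem IsSelfAdjoint.exists_mem_spectrum_abs_sub_le {x y : A} (hx : IsSelfAdjoint x)
    {μ : ℝ} (hμ : μ ∈ spectrum ℝ (x + y)) : ∃ l ∈ spectrum ℝ x, |μ - l| ≤ ‖y‖ := by
  by_contra! hfar
  rcases eq_or_ne y 0 with rfl | hy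
  · simpa using hfar μ (by simpa using hμ)
  have hypos : 0 < ‖y‖ := norm_pos_iff.mpr hy
  have hne : ∀ l ∈ spectrum ℝ x, μ - l ≠ 0 := fun l hl =>
    abs_pos.mp (hypos.trans (hfar l hl))
  have hcont : ContinuousOn (fun l : ℝ => (μ - l)⁻¹) (spectrum ℝ x) :=
    ContinuousOn.inv₀ (by fun_prop) hne
  set R := cfc (fun l : ℝ => (μ - l)⁻¹) x
  have hsub : cfc (fun l : ℝ => μ - l) x = algebraMap ℝ A μ - x := by
    rw [cfc_sub (fun _ => μ) (fun l => l) x, cfc_const μ x, cfc_id' ℝ x]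
  have hmul : (algebraMap ℝ A μ - x) * R = 1 := by
    rw [← hsub, ← cfc_mul (fun l : ℝ => μ - l) _ x (by fun_prop) hcont, ← cfc_one ℝ x]
    exact cfc_congr fun l hl => mul_inv_cancel₀ (hne l hl)
  have hmul' : R * (algebraMap ℝ A μ - x) = 1 := by
    rw [← hsub, ← cfc_mul _ (fun l : ℝ => μ - l) x hcont (by fun_prop), ← cfc_one ℝ x]
    exact cfc_congr fun l hl => inv_mul_cancel₀ (hne l hl)
  have hR : ‖R‖ < ‖y‖⁻¹ := by
    refine norm_cfc_lt (inv_pos.mpr hypos) fun l hl => ?_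
    rw [norm_inv]
    exact inv_strictAnti₀ hypos (hfar l hl)
  have hRy : ‖R * y‖ < 1 := by
    refine (norm_mul_le _ _).trans_lt ?_
    calc ‖R‖ * ‖y‖ < ‖y‖⁻¹ * ‖y‖ := by gcongr
      _ = 1 := inv_mul_cancel₀ hypos.ne'
  have hfactor : algebraMap ℝ A μ - (x + y) = (algebraMap ℝ A μ - x) * (1 - R * y) := by
    rw [mul_sub, ← mul_assoc, hmul]
    noncomm_ring
  refine hμ (spectrum.mem_resolventSet_iff.mpr ?_)
  rw [hfactor]
  exact (isUnit_iff_exists.mpr ⟨R, hmul, hmul'⟩).mul (isUnit_one_sub_of_norm_lt_one hRy)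

open Topology Filter in
/-- If `g` vanishes to first order on the finite spectrum of `x`, then the functional calculus
of `g` has vanishing directional derivatives at `x`. -/
theorem IsSelfAdjoint.hasDerivAt_cfc_add_smul_of_hasDerivAt_zero {x : A} (hx : IsSelfAdjoint x)
    (y : A) (hfin : (spectrum ℝ x).Finite) {g : ℝ → ℝ} (hg : ∀ l ∈ spectrum ℝ x, g l = 0)
    (hg' : ∀ l ∈ spectrum ℝ x, HasDerivAt g 0 l) :
    HasDerivAt (fun t : ℝ => cfc g (x + t • y)) 0 0 := by
  have hzero : cfc g x = 0 := by
    rw [← cfc_zero ℝ x]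
    exact cfc_congr hg
  rw [hasDerivAt_iff_isLittleO, Asymptotics.isLittleO_iff]
  intro ε hε
  have hy : 0 < ‖y‖ + 1 := by positivity
  set δ := ε / (‖y‖ + 1)
  have hδ : 0 < δ := by positivity
  have hlocal : ∀ l ∈ spectrum ℝ x,
      ∀ᶠ r in 𝓝 (0 : ℝ), ∀ m, |m - l| ≤ r → |g m| ≤ δ * |m - l| := by
    intro l hl
    have h := hg' l hl
    rw [hasDerivAt_iff_isLittleO, Asymptotics.isLittleO_iff] at h
    obtain ⟨ρ, hρ, hball⟩ := Metric.eventually_nhds_iff.mp (h hδ)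
    filter_upwards [Iio_mem_nhds hρ] with r hr m hm
    simpa [hg l hl] using hball (y := m) (by rw [Real.dist_eq]; exact hm.trans_lt hr)
  have htend : Tendsto (fun t : ℝ => ‖t • y‖) (𝓝 0) (𝓝 0) := by
    have : Continuous fun t : ℝ => ‖t • y‖ := by fun_prop
    simpa using this.tendsto 0
  filter_upwards [htend.eventually ((eventually_all_finite hfin).mpr hlocal)] with t ht
  simp only [zero_smul, add_zero, hzero, sub_zero, smul_zero]
  refine norm_cfc_le (by positivity) fun m hm => ?_
  obtain ⟨l, hl, hml⟩ := hx.exists_mem_spectrum_abs_sub_le hm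
  calc |g m| ≤ δ * |m - l| := ht l hl m hml
    _ ≤ δ * (‖t‖ * (‖y‖ + 1)) := by
      rw [norm_smul] at hml
      gcongr
      exact hml.trans (by gcongr; linarith)
    _ = ε * ‖t‖ := by
      simp only [δ]
      field_simp

end SpectralPerturbation

section TraceDerivative

open Matrix.Norms.L2Operator Polynomial

variable {n : Type*} [Fintype n] [DecidableEq n]

/-- The derivative of a matrix polynomial along `X + t • Y`, tested by the trace against the
commutant of `X`. -/
theorem Matrix.exists_hasDerivAt_aeval_add_smul (X Y : Matrix n n ℂ) (p : ℝ[X]) :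
    ∃ D : Matrix n n ℂ, HasDerivAt (fun t : ℝ => aeval (X + t • Y) p) D 0 ∧
      ∀ W, Commute X W → trace (D * W) = trace (Y * aeval X (derivative p) * W) := by
  have hline : HasDerivAt (fun t : ℝ => X + t • Y) Y 0 := by
    simpa using ((hasDerivAt_id (0 : ℝ)).smul_const Y).const_add X
  have hmulX : ∀ q : ℝ[X], (∃ D : Matrix n n ℂ,
      HasDerivAt (fun t : ℝ => aeval (X + t • Y) q) D 0 ∧
        ∀ W, Commute X W → trace (D * W) = trace (Y * aeval X (derivative q) * W)) →
      ∃ D : Matrix n n ℂ, HasDerivAt (fun t : ℝ => aeval (X + t • Y) (q * Polynomial.X)) D 0 ∧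
        ∀ W, Commute X W →
          trace (D * W) = trace (Y * aeval X (derivative (q * Polynomial.X)) * W) := by
    rintro q ⟨D, hD, htr⟩
    refine ⟨D * X + aeval X q * Y, by simpa using hD.fun_mul hline, fun W hW => ?_⟩
    have hqW : Commute (aeval X q) W := by
      clear hD htr
      induction q using Polynomial.induction_on' with
      | add q₁ q₂ h₁ h₂ => simpa using h₁.add_left h₂
      | monomial k a =>
        simpa [aeval_monomial] using (Algebra.commute_algebraMap_left a W).mul_left (hW.pow_left k)
    have h₁ : trace (D * X * W) = trace (Y * aeval X (derivative q) * (X * W)) := by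
      rw [mul_assoc, htr _ ((Commute.refl X).mul_right hW)]
    have h₂ : trace (aeval X q * Y * W) = trace (Y * aeval X q * W) := by
      rw [mul_assoc, trace_mul_comm, mul_assoc, mul_assoc, hqW.eq]
    rw [add_mul, trace_add, h₁, h₂, derivative_mul, derivative_X, mul_one, map_add, map_mul,
      aeval_X, mul_add, add_mul, trace_add]
    simp only [mul_assoc]
  induction p using Polynomial.induction_on with
  | C a => exact ⟨0, by simpa using hasDerivAt_const _ _, by simp⟩
  | add p q hp hq =>
    obtain ⟨D, hD, htr⟩ := hp
    obtain ⟨E, hE, htr'⟩ := hq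
    refine ⟨D + E, by simpa using hD.fun_add hE, fun W hW => ?_⟩
    simp [add_mul, mul_add, htr W hW, htr' W hW]
  | monomial k a ih =>
    rw [pow_succ, ← mul_assoc]
    exact hmulX _ ih

/-- The trace of `f (X + t • Y) * Z` is differentiable at `0` when `Z` commutes with `X` and `f`
is differentiable at the eigenvalues of `X`. -/
theorem Matrix.IsHermitian.hasDerivAt_trace_cfc_add_smul_mul {X Y Z : Matrix n n ℂ}
    (hX : X.IsHermitian) (hY : Y.IsHermitian) (hcomm : Commute X Z) {f : ℝ → ℝ}
    (hf : ∀ l ∈ spectrum ℝ X, DifferentiableAt ℝ f l) :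
    HasDerivAt (fun t : ℝ => trace (cfc f (X + t • Y) * Z))
      (trace (Y * cfc (deriv f) X * Z)) 0 := by
  have hfin := X.finite_real_spectrum
  obtain ⟨p, hp⟩ :=
    exists_polynomial_eval_eq_and_eval_derivative_eq hfin.toFinset f (deriv f)
  simp only [Set.Finite.mem_toFinset] at hp
  obtain ⟨D, hD, htr⟩ := exists_hasDerivAt_aeval_add_smul X Y p
  have hrem : HasDerivAt (fun t : ℝ => cfc (fun l => f l - p.eval l) (X + t • Y)) 0 0 := by
    refine hX.isSelfAdjoint.hasDerivAt_cfc_add_smul_of_hasDerivAt_zero Y hfin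
      (fun l hl => by simp [(hp l hl).1]) fun l hl => ?_
    simpa [(hp l hl).2] using (hf l hl).hasDerivAt.fun_sub (p.hasDerivAt l)
  have hderiv : cfc (deriv f) X = aeval X (derivative p) := by
    rw [← cfc_polynomial (derivative p) X hX.isSelfAdjoint]
    exact cfc_congr fun l hl => ((hp l hl).2).symm
  have hsplit : ∀ t : ℝ, cfc f (X + t • Y) =
      aeval (X + t • Y) p + cfc (fun l => f l - p.eval l) (X + t • Y) := by
    intro t
    have hsa : IsSelfAdjoint (X + t • Y) :=
      hX.isSelfAdjoint.add ((IsSelfAdjoint.all t).smul hY.isSelfAdjoint)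
    have hcont (h : ℝ → ℝ) : ContinuousOn h (spectrum ℝ (X + t • Y)) :=
      (X + t • Y).finite_real_spectrum.continuousOn h
    rw [cfc_sub f (fun l => p.eval l) _ (hcont _) (hcont _), cfc_polynomial p _ hsa,
      add_sub_cancel]
  rw [hderiv, ← htr Z hcomm]
  simp only [hsplit]
  let T : Matrix n n ℂ →L[ℝ] ℂ :=
    LinearMap.toContinuousLinearMap
      ((traceLinearMap n ℝ ℂ).comp (LinearMap.mulRight ℝ Z))
  simpa [T, Function.comp_def] using T.hasFDerivAt.comp_hasDerivAt (0 : ℝ) (hD.fun_add hrem)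

end TraceDerivative

/-- Derivative formula: if X Z = Z X with X, Y, Z Hermitian and f is C¹ on an open interval
containing the eigenvalues of X, then d/dt Tr[f(X + tY) Z] at t = 0 equals Tr[Y f'(X) Z]. -/
theorem stmt13 {n : ℕ} (X Y Z : Matrix (Fin n) (Fin n) ℂ)
    (hX : X.IsHermitian) (hY : Y.IsHermitian) (hZ : Z.IsHermitian)
    (hcomm : X * Z = Z * X) (f : ℝ → ℝ) (a b : ℝ)
    (hf : ContDiffOn ℝ 1 f (Set.Ioo a b))
    (hspec : ∀ i, hX.eigenvalues i ∈ Set.Ioo a b) :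
    HasDerivAt (fun t : ℝ => Matrix.trace (cfc f (X + t • Y) * Z))
      (Matrix.trace (Y * cfc (deriv f) X * Z)) 0 := by
  refine hX.hasDerivAt_trace_cfc_add_smul_mul hY hcomm fun l hl => ?_
  rw [hX.spectrum_real_eq_range_eigenvalues] at hl
  obtain ⟨i, rfl⟩ := hl
  exact (hf.differentiableOn one_ne_zero).differentiableAt (isOpen_Ioo.mem_nhds (hspec i))
end
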